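/- Let G = ∗_{i∈I} G_i be the free product of a family of left-orderable groups G_i, let A and B be finitely generated free subgroups of G each of which intersects every conjugate gG_ig⁻¹ of every free factor trivially, and let S be a system of representatives of the double cosets AsB in G. Then ∑_{s∈S} r̄ank(A ∩ sBs⁻¹) ≤ r̄ank(A) · r̄ank(B); in particular, r̄ank(A ∩ B) ≤ r̄ank(A) · r̄ank(B). -/

import Mathlib

open scoped ENNReal

/-- The rank of a group `H` (as an element of `ℝ≥0∞`): the minimal cardinality of a
finite generating set of `H`, or `⊤` if `H` is not finitely generated. -/
noncomputable def grank (H : Type*) [Group H] : ℝ≥0∞ :=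
  sInf {x : ℝ≥0∞ | ∃ s : Finset H, Subgroup.closure (s : Set H) = ⊤ ∧ x = s.card}

open Filter

/-- A tree on which `G` acts, freely on the edges and preserving a linear order of the edges:
a connected graph together with, for each vertex `v`, the set `path v` of edges (a chain mod 2)
on the path from the base vertex to `v`. -/
structure OrderedGTree (G V E : Type*) [Group G] [MulAction G V] [MulAction G E]
    [LinearOrder E] where
  src : E → V
  tgt : E → V
  src_smul : ∀ (g : G) e, src (g • e) = g • src e
  tgt_smul : ∀ (g : G) e, tgt (g • e) = g • tgt e
  base : V
  path : V → E →₀ ZMod 2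
  path_base : path base = 0
  path_tgt : ∀ e, path (tgt e) = path (src e) + Finsupp.single e 1
  connected : ∀ Z : Set V, base ∈ Z → (∀ e, src e ∈ Z ↔ tgt e ∈ Z) → ∀ v, v ∈ Z
  eq_one_of_smul_edge : ∀ (g : G) (e : E), g • e = e → g = 1
  smul_lt_smul : ∀ (g : G) (e f : E), e < f → g • e < g • f
  eq_one_of_pow : ∀ (g : G) (n : ℕ), 0 < n → g ^ n = 1 → g = 1

/-- A set of edges is tame if it has infinitely many elements exceeded by only finitely many
elements of the set. -/
def IsTame {E : Type*} [LinearOrder E] (S : Set E) : Prop :=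
  {m ∈ S | {e ∈ S | m < e}.Finite}.Infinite

theorem ZMod.two_cases (x : ZMod 2) : x = 0 ∨ x = 1 := by
  revert x; decide

theorem IsTame.of_diff_finite {E : Type*} [LinearOrder E] {S S' : Set E} (hS : IsTame S)
    (h : (S \ S').Finite) (h' : (S' \ S).Finite) : IsTame S' := by
  refine (hS.sdiff h).mono ?_
  rintro m ⟨⟨hm, hfin⟩, hmS⟩
  refine ⟨by_contra fun hc => hmS ⟨hm, hc⟩, (hfin.union h').subset ?_⟩
  rintro e ⟨he, hlt⟩
  by_cases heS : e ∈ S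
  · exact Or.inl ⟨heS, hlt⟩
  · exact Or.inr ⟨he, heS⟩

namespace OrderedGTree

variable {G V E : Type*} [Group G] [MulAction G V] [MulAction G E] [LinearOrder E]
  (T : OrderedGTree G V E)

theorem smul_le_smul (T : OrderedGTree G V E) (g : G) {e f : E} (h : e ≤ f) : g • e ≤ g • f := by
  rcases h.eq_or_lt with rfl | h
  · exact le_rfl
  · exact (T.smul_lt_smul g e f h).le

theorem pow_injective (T : OrderedGTree G V E) {g : G} (hg : g ≠ 1) :
    Function.Injective fun n : ℕ => g ^ n := by
  have key : ∀ m n : ℕ, m < n → g ^ m ≠ g ^ n := by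
    intro m n hmn h
    refine hg (T.eq_one_of_pow g (n - m) (by omega) ?_)
    rw [pow_sub g hmn.le, h, mul_inv_cancel]
  intro m n h
  rcases lt_trichotomy m n with hmn | hmn | hmn
  · exact absurd h (key _ _ hmn)
  · exact hmn
  · exact absurd h.symm (key _ _ hmn)

theorem smul_edge_injective (T : OrderedGTree G V E) (e : E) :
    Function.Injective fun g : G => g • e := by
  intro g g' h
  have : (g'⁻¹ * g) • e = e := by
    have h' : g • e = g' • e := h
    rw [mul_smul, h', inv_smul_smul]
  have := T.eq_one_of_smul_edge _ _ this
  exact (inv_mul_eq_one.mp this).symm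

theorem pow_smul_edge_injective (T : OrderedGTree G V E) {g : G} (hg : g ≠ 1) (e : E) :
    Function.Injective fun n : ℕ => g ^ n • e :=
  (T.smul_edge_injective e).comp (T.pow_injective hg)

theorem pow_inv_smul_edge_injective (T : OrderedGTree G V E) {g : G} (hg : g ≠ 1) (e : E) :
    Function.Injective fun n : ℕ => (g ^ n)⁻¹ • e :=
  (T.smul_edge_injective e).comp (inv_injective.comp (T.pow_injective hg))

theorem path_smul (g : G) (v : V) :
    T.path (g • v) = T.path (g • T.base) + (T.path v).mapDomain (g • ·) := by
  refine T.connected {v | T.path (g • v) = T.path (g • T.base) +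
    (T.path v).mapDomain (g • ·)} ?_ ?_ v
  · simp [T.path_base]
  · intro e
    have h := T.path_tgt (g • e)
    rw [T.src_smul, T.tgt_smul] at h
    simp only [Set.mem_ofPred_eq, h, T.path_tgt, Finsupp.mapDomain_add, Finsupp.mapDomain_single,
      ← add_assoc, add_left_inj]

theorem path_smul_apply (g : G) (v : V) (e : E) :
    T.path (g • v) e = T.path (g • T.base) e + T.path v (g⁻¹ • e) := by
  rw [path_smul, Finsupp.add_apply]
  congr 1
  conv_lhs => rw [← smul_inv_smul g e]
  exact Finsupp.mapDomain_apply (MulAction.injective g) _ _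

/-- The number of edges of `path v` crossing a cut, modulo 2. -/
theorem sum_cut (χ : V → ZMod 2) (v : V) :
    ((T.path v).sum fun e c => c * (χ (T.src e) + χ (T.tgt e))) = χ v + χ T.base := by
  refine T.connected {v | ((T.path v).sum fun e c => c * (χ (T.src e) + χ (T.tgt e))) =
    χ v + χ T.base} ?_ ?_ v
  · simp [T.path_base, CharTwo.add_self_eq_zero]
  · intro e
    simp only [Set.mem_ofPred_eq, T.path_tgt]
    rw [Finsupp.sum_add_index' (by simp) (by intros; ring), Finsupp.sum_single_index (by simp)]
    generalize ((T.path (T.src e)).sum fun e c => c * (χ (T.src e) + χ (T.tgt e))) = z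
    generalize χ (T.src e) = a
    generalize χ (T.tgt e) = b
    generalize χ T.base = c
    revert z a b c
    decide

theorem sum_cut_finset (χ : V → ZMod 2) (v : V) (F : Finset E)
    (hF : ∀ e, T.path v e ≠ 0 → χ (T.src e) ≠ χ (T.tgt e) → e ∈ F) :
    ∑ e ∈ F, T.path v e * (χ (T.src e) + χ (T.tgt e)) = χ v + χ T.base := by
  classical
  rw [← T.sum_cut χ v, Finsupp.sum]
  trans ∑ e ∈ F ∪ (T.path v).support, T.path v e * (χ (T.src e) + χ (T.tgt e))
  · refine Finset.sum_subset Finset.subset_union_left fun e _ heF => ?_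
    by_cases h0 : T.path v e = 0
    · simp [h0]
    · have : χ (T.src e) = χ (T.tgt e) := by_contra fun h => heF (hF e h0 h)
      simp [this, CharTwo.add_self_eq_zero]
  · refine (Finset.sum_subset Finset.subset_union_right fun e _ he => ?_).symm
    simp [Finsupp.notMem_support_iff.mp he]

/-- The vertices `h ^ n • base` converge to the infinite path `ξ`. -/
def Lim (h : G) (ξ : E → ZMod 2) : Prop :=
  ∀ e, ∀ᶠ n : ℕ in atTop, T.path (h ^ n • T.base) e = ξ e

variable {T}

theorem Lim.unique {h : G} {ξ η : E → ZMod 2} (hξ : T.Lim h ξ) (hη : T.Lim h η) : ξ = η := by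
  funext e
  obtain ⟨n, h1, h2⟩ := ((hξ e).and (hη e)).exists
  exact h1.symm.trans h2

variable (T)

theorem eventually_apply_inv_smul (T : OrderedGTree G V E) {h : G} (hh : h ≠ 1)
    (f : E →₀ ZMod 2) (e : E) :
    ∀ᶠ n : ℕ in atTop, f ((h ^ n)⁻¹ • e) = 0 := by
  have hfin : {n : ℕ | (h ^ n)⁻¹ • e ∈ (f.support : Set E)}.Finite :=
    f.support.finite_toSet.preimage (T.pow_inv_smul_edge_injective hh e).injOn
  rw [← Nat.cofinite_eq_atTop]
  filter_upwards [hfin.compl_mem_cofinite] with n hn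
  simpa using hn

theorem path_pow_succ (h : G) (n : ℕ) (e : E) :
    T.path (h ^ (n + 1) • T.base) e =
      T.path (h ^ n • T.base) e + T.path (h • T.base) ((h ^ n)⁻¹ • e) := by
  rw [pow_succ, mul_smul, T.path_smul_apply]

theorem exists_lim {h : G} (hh : h ≠ 1) : ∃ ξ, T.Lim h ξ := by
  have : ∀ e, ∃ c, ∀ᶠ n : ℕ in atTop, T.path (h ^ n • T.base) e = c := by
    intro e
    obtain ⟨N, hN⟩ := eventually_atTop.mp
      (T.eventually_apply_inv_smul hh (T.path (h • T.base)) e)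
    refine ⟨T.path (h ^ N • T.base) e, eventually_atTop.mpr ⟨N, fun n hn => ?_⟩⟩
    induction n, hn using Nat.le_induction with
    | base => rfl
    | succ n hn ih => rw [T.path_pow_succ, hN n hn, add_zero, ih]
  choose ξ hξ using this
  exact ⟨ξ, hξ⟩

variable {T}

theorem Lim.eventually {h : G} (hh : h ≠ 1) {ξ : E → ZMod 2} (hξ : T.Lim h ξ) (v : V) (e : E) :
    ∀ᶠ n : ℕ in atTop, T.path (h ^ n • v) e = ξ e := by
  filter_upwards [hξ e, T.eventually_apply_inv_smul hh (T.path v) e] with n h1 h2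
  rw [T.path_smul_apply, h1, h2, add_zero]

theorem Lim.conj {h : G} (hh : h ≠ 1) {ξ : E → ZMod 2} (hξ : T.Lim h ξ) (g : G) :
    T.Lim (g * h * g⁻¹) fun e => T.path (g • T.base) e + ξ (g⁻¹ • e) := by
  intro e
  filter_upwards [hξ.eventually hh (g⁻¹ • T.base) (g⁻¹ • e)] with n hn
  rw [conj_pow, mul_smul, mul_smul, T.path_smul_apply, hn]

theorem Lim.pow {h : G} {ξ : E → ZMod 2} (hξ : T.Lim h ξ) {a : ℕ} (ha : 0 < a) :
    T.Lim (h ^ a) ξ := by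
  intro e
  have : Tendsto (fun n : ℕ => a * n) atTop atTop := tendsto_id.const_mul_atTop' ha
  filter_upwards [this.eventually (hξ e)] with n hn
  rw [← pow_mul, hn]

/-- The limit is fixed by `h`. -/
theorem Lim.apply_smul {h : G} {ξ : E → ZMod 2} (hξ : T.Lim h ξ) (e : E) :
    ξ (h • e) = T.path (h • T.base) (h • e) + ξ e := by
  obtain ⟨n, h1, h2⟩ := (((tendsto_add_atTop_nat 1).eventually (hξ (h • e))).and (hξ e)).exists
  rw [pow_succ', mul_smul, T.path_smul_apply, inv_smul_smul, h2] at h1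
  exact h1.symm

theorem Lim.exists_of_ne_zero {h : G} {ξ : E → ZMod 2} (hξ : T.Lim h ξ) {e : E}
    (he : ξ e ≠ 0) : ∃ n : ℕ, ∃ f ∈ (T.path (h • T.base)).support, h ^ n • f = e := by
  by_contra hc
  push Not at hc
  have : ∀ n : ℕ, T.path (h ^ n • T.base) e = 0 := by
    intro n
    induction n with
    | zero => simp [T.path_base]
    | succ n ih =>
      rw [T.path_pow_succ, ih, zero_add]
      by_contra h0
      exact hc n _ (Finsupp.mem_support_iff.mpr h0) (smul_inv_smul _ _)
  obtain ⟨n, hn⟩ := (hξ e).exists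
  exact he (hn ▸ this n)

theorem Lim.eventually_inv_smul {h : G} (hh : h ≠ 1) {ξ : E → ZMod 2} (hξ : T.Lim h ξ) (e : E) :
    ∀ᶠ n : ℕ in atTop, ξ ((h ^ n)⁻¹ • e) = 0 := by
  have key : ∀ f ∈ (T.path (h • T.base)).support,
      ∀ᶠ n : ℕ in atTop, ∀ k : ℕ, h ^ k • f ≠ (h ^ n)⁻¹ • e := by
    intro f _
    by_cases hf : ∃ n₀ k₀ : ℕ, h ^ k₀ • f = (h ^ n₀)⁻¹ • e
    · obtain ⟨n₀, k₀, h0⟩ := hf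
      filter_upwards [eventually_gt_atTop (n₀ + k₀)] with n hn k hk
      have e0 : e = h ^ (n₀ + k₀) • f := by
        rw [pow_add, mul_smul, h0, smul_inv_smul]
      have e1 : e = h ^ (n + k) • f := by
        rw [pow_add, mul_smul, hk, smul_inv_smul]
      have := T.pow_smul_edge_injective hh f (e0.symm.trans e1)
      omega
    · push Not at hf
      exact Eventually.of_forall fun n k => hf n k
  filter_upwards [(Filter.eventually_all_finset _).mpr key] with n hn
  by_contra h0
  obtain ⟨k, f, hf, hk⟩ := hξ.exists_of_ne_zero h0
  exact hn f hf k hk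

/-- The subgroup `H` acts freely on the vertices. -/
def FreeOn (_ : OrderedGTree G V E) (H : Subgroup G) : Prop :=
  ∀ h ∈ H, ∀ v : V, h • v = v → h = 1

theorem FreeOn.smul_injective {H : Subgroup G} (hH : T.FreeOn H) {a b : G} (ha : a ∈ H)
    (hb : b ∈ H) {v : V} (h : a • v = b • v) : a = b := by
  have : (b⁻¹ * a) • v = v := by rw [mul_smul, h, inv_smul_smul]
  exact (inv_mul_eq_one.mp (hH _ (H.mul_mem (H.inv_mem hb) ha) v this)).symm

theorem FreeOn.eventually_ne {H : Subgroup G} (hH : T.FreeOn H) {h : G} (hh : h ∈ H)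
    (h1 : h ≠ 1) (v w : V) : ∀ᶠ n : ℕ in atTop, h ^ n • v ≠ w := by
  rw [← Nat.cofinite_eq_atTop]
  have : {n : ℕ | h ^ n • v = w}.Subsingleton := by
    intro m hm n hn
    exact T.pow_injective h1 (hH.smul_injective (H.pow_mem hh m) (H.pow_mem hh n)
      (Eq.trans hm hn.symm))
  exact this.finite.compl_mem_cofinite

theorem FreeOn.eventually_notMem {H : Subgroup G} (hH : T.FreeOn H) {h : G} (hh : h ∈ H)
    (h1 : h ≠ 1) (v : V) {C : Set V} (hC : C.Finite) : ∀ᶠ n : ℕ in atTop, h ^ n • v ∉ C := by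
  filter_upwards [(Filter.eventually_all_finite hC).mpr
    fun w _ => hH.eventually_ne hh h1 v w] with n hn hmem
  exact hn _ hmem rfl

theorem Lim.support_infinite {H : Subgroup G} (hH : T.FreeOn H) {h : G} (hh : h ∈ H)
    (h1 : h ≠ 1) {ξ : E → ZMod 2} (hξ : T.Lim h ξ) : {e | ξ e ≠ 0}.Infinite := by
  classical
  intro hfin
  set C : Set V := insert T.base (T.src '' {e | ξ e ≠ 0} ∪ T.tgt '' {e | ξ e ≠ 0}) with hCdef
  have hC : C.Finite := ((hfin.image _).union (hfin.image _)).insert _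
  have hev := (Filter.eventually_all_finite hC).mpr
    fun w _ => hH.eventually_notMem hh h1 w hC
  obtain ⟨n, hn⟩ := hev.exists
  have hstep : ∀ (n : ℕ) e, ξ e = T.path (h ^ n • T.base) e + ξ ((h ^ n)⁻¹ • e) := by
    intro n e
    rcases n.eq_zero_or_pos with rfl | hpos
    · simp [T.path_base]
    · simpa using (hξ.pow hpos).apply_smul ((h ^ n)⁻¹ • e)
  let χ : V → ZMod 2 := fun v => if v ∈ C then 1 else 0
  have h0 := T.sum_cut_finset χ (h ^ n • T.base) ∅ (by
    intro e he hne
    exfalso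
    apply hne
    by_cases hx : ξ e = 0
    · have hx' : ξ ((h ^ n)⁻¹ • e) ≠ 0 := by
        intro h'
        apply he
        have := hstep n e
        rw [hx, h', add_zero] at this
        exact this.symm
      have hs : T.src ((h ^ n)⁻¹ • e) ∈ C := Or.inr (Or.inl ⟨_, hx', rfl⟩)
      have ht : T.tgt ((h ^ n)⁻¹ • e) ∈ C := Or.inr (Or.inr ⟨_, hx', rfl⟩)
      have hs' := hn _ hs
      have ht' := hn _ ht
      rw [← T.src_smul, smul_inv_smul] at hs'
      rw [← T.tgt_smul, smul_inv_smul] at ht'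
      simp [χ, hs', ht']
    · have hs : T.src e ∈ C := Or.inr (Or.inl ⟨_, hx, rfl⟩)
      have ht : T.tgt e ∈ C := Or.inr (Or.inr ⟨_, hx, rfl⟩)
      simp [χ, hs, ht])
  have hb : T.base ∈ C := Or.inl rfl
  simp [χ, hb, hn _ hb] at h0

end OrderedGTree

namespace OrderedGTree

variable {G V E : Type*} [Group G] [MulAction G V] [MulAction G E] [LinearOrder E]
  {T : OrderedGTree G V E}

theorem path_inv_smul_base (T : OrderedGTree G V E) (h : G) (e : E) :
    T.path (h⁻¹ • T.base) e = T.path (h • T.base) (h • e) := by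
  have := T.path_smul_apply h⁻¹ (h • T.base) e
  rw [inv_smul_smul, T.path_base, inv_inv] at this
  generalize T.path (h⁻¹ • T.base) e = a at this ⊢
  generalize T.path (h • T.base) (h • e) = b at this ⊢
  revert this
  simp only [Finsupp.coe_zero, Pi.zero_apply]
  revert a b
  decide

/-- The sum of the two limits of `h` and `h⁻¹`, the indicator of the axis of `h`, is invariant. -/
theorem Lim.axis_smul {h : G} {ξ ξ' : E → ZMod 2} (hξ : T.Lim h ξ) (hξ' : T.Lim h⁻¹ ξ') (e : E) :
    ξ (h • e) + ξ' (h • e) = ξ e + ξ' e := by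
  have h1 := hξ.apply_smul e
  have h2 := hξ'.apply_smul (h • e)
  rw [inv_smul_smul, T.path_inv_smul_base] at h2
  rw [h1, h2]
  generalize T.path (h • T.base) (h • e) = a
  generalize ξ e = b
  generalize ξ' (h • e) = c
  revert a b c
  decide

theorem Lim.axis_pow_smul {h : G} {ξ ξ' : E → ZMod 2} (hξ : T.Lim h ξ) (hξ' : T.Lim h⁻¹ ξ')
    (n : ℕ) (e : E) : ξ (h ^ n • e) + ξ' (h ^ n • e) = ξ e + ξ' e := by
  induction n with
  | zero => simp
  | succ n ih => rw [pow_succ', mul_smul, hξ.axis_smul hξ', ih]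

theorem Lim.eventually_eq_axis {h : G} (hh : h ≠ 1) {ξ ξ' : E → ZMod 2} (hξ : T.Lim h ξ)
    (hξ' : T.Lim h⁻¹ ξ') (e : E) : ∀ᶠ n : ℕ in atTop, ξ (h ^ n • e) = ξ e + ξ' e := by
  filter_upwards [hξ'.eventually_inv_smul (inv_ne_one.mpr hh) e] with n hn
  rw [inv_pow, inv_inv] at hn
  rw [← hξ.axis_pow_smul hξ' n e, hn, add_zero]

theorem finite_of_eventually_notMem {S : Set ℕ} (h : ∀ᶠ n in atTop, n ∉ S) : S.Finite := by
  rw [← Nat.cofinite_eq_atTop] at h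
  exact (Filter.eventually_cofinite.mp h).subset fun n hn => not_not_intro hn

theorem Lim.exists_axis {H : Subgroup G} (hH : T.FreeOn H) {h : G} (hh : h ∈ H) (h1 : h ≠ 1)
    {ξ ξ' : E → ZMod 2} (hξ : T.Lim h ξ) (hξ' : T.Lim h⁻¹ ξ') :
    ∃ f ∈ (T.path (h • T.base)).support, ξ f + ξ' f = 1 := by
  by_contra hc
  push Not at hc
  refine hξ.support_infinite hH hh h1 ?_
  have hfin : (⋃ f ∈ (T.path (h • T.base)).support,
      (fun n : ℕ => h ^ n • f) '' {n | ξ (h ^ n • f) ≠ 0}).Finite := by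
    refine Set.Finite.biUnion (Finset.finite_toSet _) fun f hf => Set.Finite.image _ ?_
    apply finite_of_eventually_notMem
    filter_upwards [hξ.eventually_eq_axis h1 hξ' f] with n hn hmem
    exact hmem (hn.trans ((ZMod.two_cases _).resolve_right (hc f hf)))
  refine hfin.subset fun e he => ?_
  obtain ⟨n, f, hf, rfl⟩ := hξ.exists_of_ne_zero he
  exact Set.mem_biUnion hf ⟨n, he, rfl⟩

theorem Lim.isTame_of_smul_lt {h : G} (h1 : h ≠ 1) {ξ ξ' : E → ZMod 2} (hξ : T.Lim h ξ)
    (hξ' : T.Lim h⁻¹ ξ') {m : E} (hm : ξ m + ξ' m = 1)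
    (hmax : ∀ f ∈ (T.path (h • T.base)).support, ξ f + ξ' f = 1 → f ≤ m) (hlt : h • m < m) :
    IsTame {e | ξ e ≠ 0} := by
  have hanti : StrictAnti fun n : ℕ => h ^ n • m := by
    refine strictAnti_nat_of_succ_lt fun n => ?_
    rw [pow_succ, mul_smul]
    exact T.smul_lt_smul _ _ _ hlt
  obtain ⟨N, hN⟩ := eventually_atTop.mp (hξ.eventually_eq_axis h1 hξ' m)
  have hinf : ((fun n : ℕ => h ^ n • m) '' Set.Ici N).Infinite :=
    (Set.infinite_image_iff hanti.injective.injOn).mpr (Set.Ici_infinite N)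
  refine hinf.mono ?_
  rintro _ ⟨n, hn, rfl⟩
  refine ⟨?_, ?_⟩
  · change ξ (h ^ n • m) ≠ 0
    rw [hN n hn, hm]
    exact one_ne_zero
  have hfin : (⋃ f ∈ (T.path (h • T.base)).support, (fun k : ℕ => h ^ k • f) ''
      ({k | k < n} ∪ {k | ξ (h ^ k • f) ≠ 0 ∧ ξ f + ξ' f ≠ 1})).Finite := by
    refine Set.Finite.biUnion (Finset.finite_toSet _) fun f hf =>
      Set.Finite.image _ ((Set.finite_lt_nat n).union ?_)
    apply finite_of_eventually_notMem
    filter_upwards [hξ.eventually_eq_axis h1 hξ' f] with k hk hmem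
    exact hmem.1 (hk.trans ((ZMod.two_cases _).resolve_right hmem.2))
  refine hfin.subset ?_
  rintro e ⟨he, hlt'⟩
  obtain ⟨k, f, hf, rfl⟩ := hξ.exists_of_ne_zero he
  refine Set.mem_biUnion hf ⟨k, ?_, rfl⟩
  by_cases hax : ξ f + ξ' f = 1
  · refine Or.inl (show k < n from lt_of_not_ge fun hk => ?_)
    exact absurd hlt' (not_lt.mpr ((T.smul_le_smul _ (hmax f hf hax)).trans (hanti.antitone hk)))
  · exact Or.inr ⟨he, hax⟩

/-- For `h ≠ 1` in a subgroup acting freely, one of the two directions of the axis is tame. -/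
theorem isTame_or_isTame {H : Subgroup G} (hH : T.FreeOn H) {h : G} (hh : h ∈ H) (h1 : h ≠ 1)
    {ξ ξ' : E → ZMod 2} (hξ : T.Lim h ξ) (hξ' : T.Lim h⁻¹ ξ') :
    IsTame {e | ξ e ≠ 0} ∨ IsTame {e | ξ' e ≠ 0} := by
  classical
  obtain ⟨f₀, hf₀, hax₀⟩ := hξ.exists_axis hH hh h1 hξ'
  obtain ⟨m, hm, hmax⟩ := ((T.path (h • T.base)).support.filter
    fun f => ξ f + ξ' f = 1).exists_max_image id ⟨f₀, by simpa using ⟨by simpa using hf₀, hax₀⟩⟩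
  simp only [Finset.mem_filter, id, and_imp] at hm hmax
  rcases lt_trichotomy (h • m) m with hlt | heq | hgt
  · exact Or.inl (hξ.isTame_of_smul_lt h1 hξ' hm.2 hmax hlt)
  · exact absurd (T.eq_one_of_smul_edge _ _ heq) h1
  · right
    have hξ'' : T.Lim h⁻¹⁻¹ ξ := by rwa [inv_inv]
    have hax : ∀ f, ξ' (h⁻¹ • f) + ξ (h⁻¹ • f) = ξ f + ξ' f := by
      intro f
      rw [add_comm, ← hξ.axis_smul hξ', smul_inv_smul]
    refine hξ'.isTame_of_smul_lt (inv_ne_one.mpr h1) hξ'' (m := h⁻¹ • m) ?_ ?_ ?_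
    · rw [hax, hm.2]
    · intro f hf hfax
      have hf' : h • f ∈ (T.path (h • T.base)).support := by
        rw [Finsupp.mem_support_iff, ← T.path_inv_smul_base]
        exact Finsupp.mem_support_iff.mp hf
      have := hmax (h • f) hf' (by rw [← hax, inv_smul_smul]; exact hfax)
      simpa using T.smul_le_smul h⁻¹ this
    · apply T.smul_lt_smul
      simpa using T.smul_lt_smul h⁻¹ _ _ hgt

theorem Lim.exists_pow_eq_pow {h k : G} {ξ η : E → ZMod 2} (hξ : T.Lim h ξ) (hη : T.Lim k η)
    (hinf : ({e | ξ e ≠ 0} ∩ {e | η e ≠ 0}).Infinite) :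
    ∃ a b : ℕ, 0 < a ∧ 0 < b ∧ h ^ a = k ^ b := by
  have hcover : ∀ e ∈ {e | ξ e ≠ 0} ∩ {e | η e ≠ 0},
      ∃ p ∈ ((T.path (h • T.base)).support ×ˢ (T.path (k • T.base)).support : Finset (E × E)),
        ∃ n m : ℕ, h ^ n • p.1 = e ∧ k ^ m • p.2 = e := by
    rintro e ⟨he, he'⟩
    obtain ⟨n, f, hf, hn⟩ := hξ.exists_of_ne_zero he
    obtain ⟨m, f', hf', hm⟩ := hη.exists_of_ne_zero he'
    exact ⟨(f, f'), Finset.mk_mem_product hf hf', n, m, hn, hm⟩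
  obtain ⟨p, -, hp⟩ : ∃ p ∈ ((T.path (h • T.base)).support ×ˢ
      (T.path (k • T.base)).support : Finset (E × E)),
      {e | ∃ n m : ℕ, h ^ n • p.1 = e ∧ k ^ m • p.2 = e}.Infinite := by
    by_contra hc
    push Not at hc
    refine hinf (Set.Finite.subset (Set.Finite.biUnion (Finset.finite_toSet _) hc) ?_)
    intro e he
    obtain ⟨p, hp, h'⟩ := hcover e he
    exact Set.mem_biUnion hp h'
  obtain ⟨x, n, m, hn, hm⟩ := hp.nonempty
  have hfin : ((fun i : ℕ => h ^ i • p.1) '' Set.Iic n ∪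
      (fun i : ℕ => k ^ i • p.2) '' Set.Iic m).Finite :=
    ((Set.finite_Iic n).image _).union ((Set.finite_Iic m).image _)
  obtain ⟨y, ⟨n', m', hn', hm'⟩, hy⟩ := (hp.sdiff hfin).nonempty
  have hnn : n < n' := lt_of_not_ge fun hle => hy (Or.inl ⟨n', hle, hn'⟩)
  have hmm : m < m' := lt_of_not_ge fun hle => hy (Or.inr ⟨m', hle, hm'⟩)
  refine ⟨n' - n, m' - m, by omega, by omega, T.smul_edge_injective x ?_⟩
  change h ^ (n' - n) • x = k ^ (m' - m) • x
  conv_lhs => rw [← hn, ← mul_smul, ← pow_add, Nat.sub_add_cancel hnn.le, hn', ← hm']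
  conv_rhs => rw [← hm, ← mul_smul, ← pow_add, Nat.sub_add_cancel hmm.le]

theorem Lim.exists_isGreatest {h k : G} {ξ η : E → ZMod 2} (hξ : T.Lim h ξ) (hη : T.Lim k η)
    (tξ : IsTame {e | ξ e ≠ 0}) (tη : IsTame {e | η e ≠ 0}) (hne : ξ ≠ η) :
    ∃ e, IsGreatest {f | ξ f ≠ η f} e := by
  by_cases hinf : ({e | ξ e ≠ 0} ∩ {e | η e ≠ 0}).Infinite
  · obtain ⟨a, b, ha, hb, hab⟩ := hξ.exists_pow_eq_pow hη hinf
    exact absurd ((hξ.pow ha).unique (hab ▸ hη.pow hb)) hne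
  rw [Set.not_infinite] at hinf
  obtain ⟨m₁, ⟨hm₁, hfin₁⟩, hn₁⟩ := (Set.Infinite.sdiff tξ hinf).nonempty
  obtain ⟨m₂, ⟨hm₂, hfin₂⟩, hn₂⟩ := (Set.Infinite.sdiff tη hinf).nonempty
  have hd₁ : ξ m₁ ≠ η m₁ := fun h => hn₁ ⟨hm₁, fun h' => hm₁ (h.trans h')⟩
  have hd₂ : ξ m₂ ≠ η m₂ := fun h => hn₂ ⟨fun h' => hm₂ (h.symm.trans h'), hm₂⟩
  have hd : max m₁ m₂ ∈ {f | ξ f ≠ η f} := by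
    rcases max_choice m₁ m₂ with h | h <;> rw [h] <;> assumption
  have hfin : {f | ξ f ≠ η f ∧ max m₁ m₂ ≤ f}.Finite := by
    refine ((hfin₁.union hfin₂).insert (max m₁ m₂)).subset ?_
    rintro f ⟨hf, hle⟩
    rcases hle.eq_or_lt with heq | hlt
    · exact Or.inl heq.symm
    · rcases max_lt_iff.mp hlt with ⟨hl₁, hl₂⟩
      by_cases h0 : ξ f = 0
      · exact Or.inr (Or.inr ⟨fun h' => hf (h0.trans h'.symm), hl₂⟩)
      · exact Or.inr (Or.inl ⟨h0, hl₁⟩)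
  obtain ⟨e, he, hmax⟩ := Set.exists_max_image _ id hfin ⟨_, hd, le_rfl⟩
  refine ⟨e, he.1, fun f hf => ?_⟩
  by_contra hlt
  rw [not_le] at hlt
  exact absurd (hmax f ⟨hf, he.2.trans hlt.le⟩) (not_le.mpr hlt)

/-- The ends of the tree that are tame limits of the powers of some element of `H`. -/
def IsEnd (T : OrderedGTree G V E) (H : Subgroup G) (ξ : E → ZMod 2) : Prop :=
  ∃ h ∈ H, h ≠ 1 ∧ T.Lim h ξ ∧ IsTame {e | ξ e ≠ 0}

/-- The bridges of `H`: the edges that are greatest on a line joining two tame ends of `H`. -/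
def bridges (T : OrderedGTree G V E) (H : Subgroup G) : Set E :=
  {e | ∃ ξ η, T.IsEnd H ξ ∧ T.IsEnd H η ∧ IsGreatest {f | ξ f ≠ η f} e}

theorem IsEnd.eq_of_eqOn_bridges {H : Subgroup G} {ξ η : E → ZMod 2} (hξ : T.IsEnd H ξ)
    (hη : T.IsEnd H η) (h : ∀ e ∈ T.bridges H, ξ e = η e) : ξ = η := by
  by_contra hne
  obtain ⟨a, ha, a1, la, ta⟩ := id hξ
  obtain ⟨b, hb, b1, lb, tb⟩ := id hη
  obtain ⟨e, he⟩ := la.exists_isGreatest lb ta tb hne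
  exact he.1 (h e ⟨ξ, η, hξ, hη, he⟩)

theorem bridges_mono (T : OrderedGTree G V E) {H K : Subgroup G} (hHK : H ≤ K) :
    T.bridges H ⊆ T.bridges K := by
  rintro e ⟨ξ, η, ⟨a, ha, ha'⟩, ⟨b, hb, hb'⟩, he⟩
  exact ⟨ξ, η, ⟨a, hHK ha, ha'⟩, ⟨b, hHK hb, hb'⟩, he⟩

theorem IsEnd.smul {H K : Subgroup G} {g : G} (hK : ∀ h ∈ H, g * h * g⁻¹ ∈ K)
    {ξ : E → ZMod 2} (hξ : T.IsEnd H ξ) :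
    T.IsEnd K fun e => T.path (g • T.base) e + ξ (g⁻¹ • e) := by
  obtain ⟨a, ha, a1, la, ta⟩ := hξ
  refine ⟨g * a * g⁻¹, hK a ha, by simpa using a1, la.conj a1 g, ?_⟩
  have key : IsTame {e | ξ (g⁻¹ • e) ≠ 0} := by
    have hinj : Function.Injective fun e : E => g • e := MulAction.injective g
    refine (Set.Infinite.image hinj.injOn ta).mono ?_
    rintro _ ⟨m, ⟨hm, hfin⟩, rfl⟩
    refine ⟨by simpa using hm, (hfin.image fun e => g • e).subset ?_⟩
    rintro e ⟨he, hlt⟩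
    refine ⟨g⁻¹ • e, ⟨he, ?_⟩, smul_inv_smul g e⟩
    simpa using T.smul_lt_smul g⁻¹ _ _ hlt
  have hfin := (T.path (g • T.base)).support.finite_toSet
  refine key.of_diff_finite (hfin.subset ?_) (hfin.subset ?_)
  · rintro e ⟨he, hne⟩
    rw [Finset.mem_coe, Finsupp.mem_support_iff]
    intro h0
    refine hne ?_
    change T.path (g • T.base) e + ξ (g⁻¹ • e) ≠ 0
    rw [h0, zero_add]
    exact he
  · rintro e ⟨he, hne⟩
    rw [Finset.mem_coe, Finsupp.mem_support_iff]
    intro h0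
    refine hne ?_
    change T.path (g • T.base) e + ξ (g⁻¹ • e) ≠ 0 at he
    rwa [h0, zero_add] at he

theorem smul_mem_bridges {H K : Subgroup G} {g : G} (hK : ∀ h ∈ H, g * h * g⁻¹ ∈ K) {e : E}
    (he : e ∈ T.bridges H) : g • e ∈ T.bridges K := by
  obtain ⟨ξ, η, hξ, hη, h1, h2⟩ := he
  refine ⟨_, _, hξ.smul hK, hη.smul hK, ?_, ?_⟩
  · simpa using h1
  · intro f hf
    have : ξ (g⁻¹ • f) ≠ η (g⁻¹ • f) := fun h => hf (by simp [h])
    simpa using T.smul_le_smul g (h2 this)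

theorem smul_mem_bridges_of_mem {H : Subgroup G} {g : G} (hg : g ∈ H) {e : E}
    (he : e ∈ T.bridges H) : g • e ∈ T.bridges H :=
  smul_mem_bridges (fun _ hh => H.mul_mem (H.mul_mem hg hh) (H.inv_mem hg)) he

theorem smul_mem_bridges_iff {H : Subgroup G} {g : G} (hg : g ∈ H) {e : E} :
    g • e ∈ T.bridges H ↔ e ∈ T.bridges H := by
  refine ⟨fun h => ?_, smul_mem_bridges_of_mem hg⟩
  simpa using smul_mem_bridges_of_mem (H.inv_mem hg) h

end OrderedGTree

section Generation

variable {H V E α : Type*} [Group H] [MulAction H V] [MulAction H E]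

/-- The orbits of the edges of `Br` with both endpoints in `Z`. -/
def innerOrbits (H : Type*) {V E : Type*} [Group H] [MulAction H E] (src tgt : E → V)
    (Br : Set E) (Z : Set V) : Set (MulAction.orbitRel.Quotient H E) :=
  (Quotient.mk'') '' {e ∈ Br | src e ∈ Z ∧ tgt e ∈ Z}

/-- `Z` is a union of fibres of `p`, and its translates by `H` are either `Z` itself or disjoint
from it, the stabilizer being generated by `X`. -/
structure IsBlock (p : V → α) (X : Finset H) (Z : Set V) : Prop where
  saturated : ∀ v w, p v = p w → v ∈ Z → w ∈ Z
  smul_mem : ∀ k ∈ Subgroup.closure (X : Set H), ∀ v ∈ Z, k • v ∈ Z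
  mem_closure : ∀ (h : H), ∀ v ∈ Z, h • v ∈ Z → h ∈ Subgroup.closure (X : Set H)

theorem isBlock_closure_smul {p : V → α} (hp : ∀ (h : H) v w, p v = p w → p (h • v) = p (h • w))
    {X : Finset H} {Z : Set V} (hZ : ∀ v w, p v = p w → v ∈ Z → w ∈ Z)
    (hX : ∀ (h : H), ∀ v ∈ Z, h • v ∈ Z → h ∈ Subgroup.closure (X : Set H)) :
    IsBlock p X {x | ∃ k ∈ Subgroup.closure (X : Set H), ∃ v ∈ Z, k • v = x} := by
  refine ⟨?_, ?_, ?_⟩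
  · rintro _ w hw ⟨k, hk, v, hv, rfl⟩
    refine ⟨k, hk, k⁻¹ • w, hZ v _ ?_ hv, smul_inv_smul k w⟩
    simpa using hp k⁻¹ _ _ hw
  · rintro l hl _ ⟨k, hk, v, hv, rfl⟩
    exact ⟨l * k, mul_mem hl hk, v, hv, mul_smul l k v⟩
  · rintro h _ ⟨k, hk, v, hv, rfl⟩ ⟨l, hl, w, hw, hlw⟩
    have hmem : l⁻¹ * h * k ∈ Subgroup.closure (X : Set H) := by
      refine hX _ v hv ?_
      rwa [mul_smul, mul_smul, ← hlw, inv_smul_smul]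
    have := mul_mem (mul_mem hl hmem) (inv_mem hk)
    simpa [mul_assoc] using this

variable {src tgt : E → V} {p : V → α} {Br : Set E}

theorem IsBlock.orbit_notMem (hsrc : ∀ (h : H) e, src (h • e) = h • src e)
    (htgt : ∀ (h : H) e, tgt (h • e) = h • tgt e) {X : Finset H} {Z : Set V} (hZ : IsBlock p X Z)
    {e : E} (he : ¬(src e ∈ Z ↔ tgt e ∈ Z)) :
    (Quotient.mk'' e : MulAction.orbitRel.Quotient H E) ∉ innerOrbits H src tgt Br Z := by
  rintro ⟨f, ⟨-, hs, ht⟩, hf⟩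
  obtain ⟨h, rfl⟩ : ∃ h : H, h • f = e := by
    have := Quotient.eq''.mp hf
    rw [MulAction.orbitRel_apply] at this
    obtain ⟨h, hh⟩ := this
    exact ⟨h⁻¹, by rw [← hh]; exact inv_smul_smul h e⟩
  rw [hsrc, htgt] at he
  exact he ⟨fun h' => hZ.smul_mem h (hZ.mem_closure h _ hs h') _ ht,
    fun h' => hZ.smul_mem h (hZ.mem_closure h _ ht h') _ hs⟩

theorem IsBlock.exists_extension {p : V → α}
    (hp : ∀ (h : H) v w, p v = p w → p (h • v) = p (h • w))
    (hcyc : ∀ v, ∃ c : H, ∀ h : H, p (h • v) = p v → h ∈ Subgroup.zpowers c)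
    {X : Finset H} {Z : Set V} (hZ : IsBlock p X Z) (z : V) :
    ∃ (X' : Finset H) (Z' : Set V), IsBlock p X' Z' ∧ Z ⊆ Z' ∧ z ∈ Z' ∧
      X'.card ≤ X.card + 1 := by
  classical
  by_cases hex : ∃ h : H, h • z ∈ Z
  · obtain ⟨h, hh⟩ := hex
    have hle : Subgroup.closure (X : Set H) ≤ Subgroup.closure (insert h X : Finset H) :=
      Subgroup.closure_mono (by simp)
    have hmem : h ∈ Subgroup.closure ((insert h X : Finset H) : Set H) :=
      Subgroup.subset_closure (by simp)
    refine ⟨insert h X, _, isBlock_closure_smul hp hZ.saturated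
      fun t v hv ht => hle (hZ.mem_closure t v hv ht),
      fun v hv => ⟨1, one_mem _, v, hv, one_smul _ v⟩,
      ⟨h⁻¹, inv_mem hmem, _, hh, inv_smul_smul h z⟩, Finset.card_insert_le h X⟩
  · push Not at hex
    obtain ⟨c, hc⟩ := hcyc z
    have hle : Subgroup.closure (X : Set H) ≤ Subgroup.closure (insert c X : Finset H) :=
      Subgroup.closure_mono (by simp)
    have hmem : Subgroup.zpowers c ≤ Subgroup.closure ((insert c X : Finset H) : Set H) :=
      Subgroup.zpowers_le.mpr (Subgroup.subset_closure (by simp))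
    refine ⟨insert c X, _, isBlock_closure_smul (Z := Z ∪ {w | p w = p z}) hp ?_ ?_,
      fun v hv => ⟨1, one_mem _, v, Or.inl hv, one_smul _ v⟩,
      ⟨1, one_mem _, z, Or.inr rfl, one_smul _ z⟩, Finset.card_insert_le c X⟩
    · rintro v w hvw (hv | hv)
      · exact Or.inl (hZ.saturated v w hvw hv)
      · exact Or.inr (hvw.symm.trans hv)
    · rintro t v (hv | hv) (ht | ht)
      · exact hle (hZ.mem_closure t v hv ht)
      · refine absurd (hZ.saturated v (t⁻¹ • z) ?_ hv) (hex t⁻¹)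
        simpa using hp t⁻¹ _ _ ht
      · exact absurd (hZ.saturated _ _ (hp t _ _ hv) ht) (hex t)
      · exact hmem (hc t ((hp t _ _ hv).symm.trans ht))

/-- A group acting on a connected graph is generated by one element for each orbit of edges in
`Br`, together with one more element, if the other edges join vertices in the same fibre of the
equivariant map `p` and the stabilizers of the fibres of `p` are cyclic. -/
theorem exists_closure_eq_top_card_le (hsrc : ∀ (h : H) e, src (h • e) = h • src e)
    (htgt : ∀ (h : H) e, tgt (h • e) = h • tgt e) (base : V)
    (hconn : ∀ Z : Set V, base ∈ Z → (∀ e, src e ∈ Z ↔ tgt e ∈ Z) → ∀ v, v ∈ Z)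
    (hp : ∀ (h : H) v w, p v = p w → p (h • v) = p (h • w))
    (hcyc : ∀ v, ∃ c : H, ∀ h : H, p (h • v) = p v → h ∈ Subgroup.zpowers c)
    (hBr : ∀ e, e ∉ Br → p (src e) = p (tgt e))
    (hfin : ((Quotient.mk'') '' Br : Set (MulAction.orbitRel.Quotient H E)).Finite) :
    ∃ X : Finset H, Subgroup.closure (X : Set H) = ⊤ ∧
      X.card ≤ ((Quotient.mk'') '' Br : Set (MulAction.orbitRel.Quotient H E)).ncard + 1 := by
  classical
  have hsub : ∀ Z : Set V, innerOrbits H src tgt Br Z ⊆ (Quotient.mk'') '' Br :=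
    fun Z => Set.image_mono fun e he => he.1
  have main : ∀ (n : ℕ) (X : Finset H) (Z : Set V), IsBlock p X Z → base ∈ Z →
      X.card ≤ (innerOrbits H src tgt Br Z).ncard + 1 →
      ((Quotient.mk'') '' Br : Set (MulAction.orbitRel.Quotient H E)).ncard ≤
        (innerOrbits H src tgt Br Z).ncard + n →
      ∃ X : Finset H, Subgroup.closure (X : Set H) = ⊤ ∧
        X.card ≤ ((Quotient.mk'') '' Br : Set (MulAction.orbitRel.Quotient H E)).ncard + 1 := by
    intro n
    induction n with
    | zero | succ n ih =>
      intro X Z hZ hb hcard hn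
      by_cases hall : ∀ e, src e ∈ Z ↔ tgt e ∈ Z
      · have huniv := hconn Z hb hall
        refine ⟨X, eq_top_iff.mpr fun h _ => hZ.mem_closure h base hb (huniv _), hcard.trans ?_⟩
        exact Nat.add_le_add_right (Set.ncard_le_ncard (hsub Z) hfin) 1
      · push Not at hall
        obtain ⟨e, he⟩ := hall
        replace he : ¬(src e ∈ Z ↔ tgt e ∈ Z) := by tauto
        have heBr : e ∈ Br := by
          by_contra hc
          exact he ⟨hZ.saturated _ _ (hBr e hc), hZ.saturated _ _ (hBr e hc).symm⟩
        have hnot := hZ.orbit_notMem (Br := Br) hsrc htgt he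
        have hlt : ∀ Z' : Set V, Z ⊆ Z' → src e ∈ Z' → tgt e ∈ Z' →
            (innerOrbits H src tgt Br Z).ncard < (innerOrbits H src tgt Br Z').ncard := by
          intro Z' hZZ hs ht
          refine Set.ncard_lt_ncard ⟨Set.image_mono fun f hf => ⟨hf.1, hZZ hf.2.1, hZZ hf.2.2⟩,
            fun hle => hnot (hle ⟨e, ⟨heBr, hs, ht⟩, rfl⟩)⟩ (hfin.subset (hsub Z'))
        obtain ⟨X', Z', hZ', hZZ, hs, ht, hcard'⟩ : ∃ (X' : Finset H) (Z' : Set V),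
            IsBlock p X' Z' ∧ Z ⊆ Z' ∧ src e ∈ Z' ∧ tgt e ∈ Z' ∧ X'.card ≤ X.card + 1 := by
          by_cases hs : src e ∈ Z
          · obtain ⟨X', Z', h1, h2, h3, h4⟩ := hZ.exists_extension hp hcyc (tgt e)
            exact ⟨X', Z', h1, h2, h2 hs, h3, h4⟩
          · have ht : tgt e ∈ Z := by tauto
            obtain ⟨X', Z', h1, h2, h3, h4⟩ := hZ.exists_extension hp hcyc (src e)
            exact ⟨X', Z', h1, h2, h3, h2 ht, h4⟩
        have hlt' := hlt Z' hZZ hs ht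
        first
        | exact ih X' Z' hZ' (hZZ hb) (by omega) (by omega)
        | exact absurd (Set.ncard_le_ncard (hsub Z') hfin) (by omega)
  obtain ⟨c, hc⟩ := hcyc base
  refine main _ {c} _ (isBlock_closure_smul (Z := {w | p w = p base}) hp
    (fun v w h hv => h.symm.trans hv) ?_) ⟨1, one_mem _, base, rfl, one_smul _ _⟩ (by simp)
    (Nat.le_add_left _ _)
  intro t v hv ht
  rw [Finset.coe_singleton, ← Subgroup.zpowers_eq_closure]
  exact hc t ((hp t _ _ hv).symm.trans ht)

end Generation

theorem IsFreeGroup.exists_zpowers_eq_top {K : Type*} [Group K] [IsFreeGroup K]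
    (hK : ∀ h k : K, h ≠ 1 → k ≠ 1 → ∃ a b : ℤ, a ≠ 0 ∧ h ^ a = k ^ b) :
    ∃ c : K, ∀ k, k ∈ Subgroup.zpowers c := by
  classical
  have hof : ∀ x, (IsFreeGroup.of x : K) ≠ 1 := by
    intro x hx
    have := congrArg (IsFreeGroup.lift fun _ => Multiplicative.ofAdd (1 : ℤ)) hx
    simp at this
  have hsub : Subsingleton (IsFreeGroup.Generators K) := by
    refine ⟨fun x y => by_contra fun hxy => ?_⟩
    obtain ⟨a, b, ha, hab⟩ := hK _ _ (hof x) (hof y)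
    have := congrArg (IsFreeGroup.lift
      fun z => Multiplicative.ofAdd (if z = x then (1 : ℤ) else 0)) hab
    have hyx : y ≠ x := fun h => hxy h.symm
    simp only [map_zpow, IsFreeGroup.lift_of, if_neg hyx] at this
    simp [← ofAdd_zsmul] at this
    exact ha this
  rcases isEmpty_or_nonempty (IsFreeGroup.Generators K) with hemp | ⟨⟨x⟩⟩
  · refine ⟨1, fun k => ?_⟩
    have : MonoidHom.id K = 1 := IsFreeGroup.ext_hom fun x => hemp.elim x
    have hk : k = 1 := DFunLike.congr_fun this k
    rw [hk]
    exact one_mem _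
  · refine ⟨IsFreeGroup.of x, fun k => ?_⟩
    let f : K →* Subgroup.zpowers (IsFreeGroup.of x : K) :=
      IsFreeGroup.lift fun _ => ⟨IsFreeGroup.of x, Subgroup.mem_zpowers _⟩
    have : (Subgroup.subtype _).comp f = MonoidHom.id K := by
      refine IsFreeGroup.ext_hom fun y => ?_
      rw [Subsingleton.elim y x]
      simp [f]
    have hk : ((f k : Subgroup.zpowers (IsFreeGroup.of x : K)) : K) = k := DFunLike.congr_fun this k
    rw [← hk]
    exact (f k).2

namespace OrderedGTree

variable {G V E : Type*} [Group G] [MulAction G V] [MulAction G E] [LinearOrder E]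
  {T : OrderedGTree G V E}

/-- The path to `v`, restricted to the bridges of `H`. -/
def bridgePath (T : OrderedGTree G V E) (H : Subgroup G) (v : V) : T.bridges H → ZMod 2 :=
  fun e => T.path v e

theorem bridgePath_smul {H : Subgroup G} {h : G} (hh : h ∈ H) {v w : V}
    (hvw : T.bridgePath H v = T.bridgePath H w) :
    T.bridgePath H (h • v) = T.bridgePath H (h • w) := by
  funext e
  have := congrFun hvw ⟨h⁻¹ • e, smul_mem_bridges_of_mem (H.inv_mem hh) e.2⟩
  simp only [bridgePath] at this ⊢
  rw [T.path_smul_apply h v, T.path_smul_apply h w, this]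

theorem bridgePath_pow_smul {H : Subgroup G} {h : G} (hh : h ∈ H) {v : V}
    (hv : T.bridgePath H (h • v) = T.bridgePath H v) (n : ℕ) :
    T.bridgePath H (h ^ n • v) = T.bridgePath H v := by
  induction n with
  | zero => simp
  | succ n ih => rw [pow_succ', mul_smul, bridgePath_smul hh ih, hv]

theorem bridgePath_inv_smul {H : Subgroup G} {h : G} (hh : h ∈ H) {v : V}
    (hv : T.bridgePath H (h • v) = T.bridgePath H v) :
    T.bridgePath H (h⁻¹ • v) = T.bridgePath H v := by
  simpa using (bridgePath_smul (H.inv_mem hh) hv).symm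

theorem bridgePath_src_eq_tgt {H : Subgroup G} {e : E} (he : e ∉ T.bridges H) :
    T.bridgePath H (T.src e) = T.bridgePath H (T.tgt e) := by
  funext f
  have hne : e ≠ f := fun h => he (h ▸ f.2)
  simp [bridgePath, T.path_tgt, Finsupp.single_eq_of_ne' hne]

/-- A nontrivial element of the stabilizer of a fibre of `bridgePath`, or its inverse, converges to
a tame end belonging to the same fibre. -/
theorem exists_isEnd_of_bridgePath_smul {H : Subgroup G} (hH : T.FreeOn H) {h : G} (hh : h ∈ H)
    (h1 : h ≠ 1) {v : V} (hv : T.bridgePath H (h • v) = T.bridgePath H v) :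
    ∃ g ξ, (g = h ∨ g = h⁻¹) ∧ T.Lim g ξ ∧ T.IsEnd H ξ ∧ ∀ e ∈ T.bridges H, ξ e = T.path v e := by
  have key : ∀ g ∈ H, g ≠ 1 → T.bridgePath H (g • v) = T.bridgePath H v → ∀ ξ, T.Lim g ξ →
      ∀ e ∈ T.bridges H, ξ e = T.path v e := by
    intro g hg g1 hgv ξ hξ e he
    obtain ⟨n, hn⟩ := (hξ.eventually g1 v e).exists
    rw [← hn]
    exact congrFun (bridgePath_pow_smul hg hgv n) ⟨e, he⟩
  obtain ⟨ξ, hξ⟩ := T.exists_lim h1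
  obtain ⟨ξ', hξ'⟩ := T.exists_lim (inv_ne_one.mpr h1)
  rcases isTame_or_isTame hH hh h1 hξ hξ' with ht | ht
  · exact ⟨h, ξ, Or.inl rfl, hξ, ⟨h, hh, h1, hξ, ht⟩, key h hh h1 hv ξ hξ⟩
  · have hi := inv_ne_one.mpr h1
    exact ⟨h⁻¹, ξ', Or.inr rfl, hξ', ⟨h⁻¹, H.inv_mem hh, hi, hξ', ht⟩,
      key h⁻¹ (H.inv_mem hh) hi (bridgePath_inv_smul hh hv) ξ' hξ'⟩

theorem exists_zpow_eq_zpow {H : Subgroup G} (hH : T.FreeOn H) {h k : G} (hh : h ∈ H)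
    (h1 : h ≠ 1) (hk : k ∈ H) (k1 : k ≠ 1) {v : V}
    (hv : T.bridgePath H (h • v) = T.bridgePath H v)
    (kv : T.bridgePath H (k • v) = T.bridgePath H v) : ∃ a b : ℤ, a ≠ 0 ∧ h ^ a = k ^ b := by
  obtain ⟨g, ξ, hg, lξ, eξ, bξ⟩ := exists_isEnd_of_bridgePath_smul hH hh h1 hv
  obtain ⟨l, η, hl, lη, eη, bη⟩ := exists_isEnd_of_bridgePath_smul hH hk k1 kv
  obtain rfl : ξ = η :=
    eξ.eq_of_eqOn_bridges eη fun e he => (bξ e he).trans (bη e he).symm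
  have hinf : {e | ξ e ≠ 0}.Infinite := by
    obtain ⟨a, ha, a1, la, -⟩ := eξ
    exact la.support_infinite hH ha a1
  obtain ⟨a, b, ha, hb, hab⟩ := lξ.exists_pow_eq_pow lη (by rwa [Set.inter_self])
  have ha' : (a : ℤ) ≠ 0 := by exact_mod_cast ha.ne'
  rcases hg with rfl | rfl <;> rcases hl with rfl | rfl
  · exact ⟨a, b, ha', by simpa using hab⟩
  · exact ⟨a, -b, ha', by simpa using hab⟩
  · exact ⟨-a, b, neg_ne_zero.mpr ha', by simpa using hab⟩
  · exact ⟨-a, -b, neg_ne_zero.mpr ha', by simpa using hab⟩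

/-- The set of orbits of bridges of `H`. -/
def bridgeOrbits (T : OrderedGTree G V E) (H : Subgroup G) :
    Set (MulAction.orbitRel.Quotient H E) :=
  (Quotient.mk'') '' T.bridges H

theorem exists_generators {H : Subgroup G} [IsFreeGroup H] (hH : T.FreeOn H)
    (hfin : (T.bridgeOrbits H).Finite) :
    ∃ X : Finset H, Subgroup.closure (X : Set H) = ⊤ ∧
      X.card ≤ (T.bridgeOrbits H).ncard + 1 := by
  refine exists_closure_eq_top_card_le (p := T.bridgePath H) (fun h e => T.src_smul h e)
    (fun h e => T.tgt_smul h e) T.base T.connected (fun h v w => bridgePath_smul h.2) ?_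
    (fun e he => bridgePath_src_eq_tgt he) hfin
  intro v
  let K : Subgroup H :=
    { carrier := {h | T.bridgePath H (h • v) = T.bridgePath H v}
      one_mem' := by simp
      mul_mem' := fun {a b} ha hb => by
        change T.bridgePath H ((a * b) • v) = _
        rw [mul_smul]
        exact (bridgePath_smul a.2 hb).trans ha
      inv_mem' := fun {a} ha => bridgePath_inv_smul a.2 ha }
  obtain ⟨c, hc⟩ := IsFreeGroup.exists_zpowers_eq_top (K := K) (by
    intro h k h1 k1
    obtain ⟨a, b, ha, hab⟩ := exists_zpow_eq_zpow hH (h := (h : H)) (k := (k : H)) h.1.2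
      (by simpa using h1) k.1.2 (by simpa using k1) h.2 k.2
    exact ⟨a, b, ha, by ext; simpa using hab⟩)
  refine ⟨c, fun h hh => ?_⟩
  obtain ⟨n, hn⟩ := hc ⟨h, hh⟩
  exact ⟨n, by simpa using congrArg (Subgroup.subtype K) hn⟩

end OrderedGTree

namespace OrderedGTree

variable {G V E : Type*} [Group G] [MulAction G V] [MulAction G E] [LinearOrder E]

/-- The action restricted to a subgroup. -/
def restrict (T : OrderedGTree G V E) (H : Subgroup G) : OrderedGTree H V E where
  src := T.src
  tgt := T.tgt
  src_smul h e := T.src_smul h e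
  tgt_smul h e := T.tgt_smul h e
  base := T.base
  path := T.path
  path_base := T.path_base
  path_tgt := T.path_tgt
  connected := T.connected
  eq_one_of_smul_edge h e he := Subtype.ext (T.eq_one_of_smul_edge h e he)
  smul_lt_smul h e f hef := T.smul_lt_smul h e f hef
  eq_one_of_pow h n hn hh := Subtype.ext
    (T.eq_one_of_pow h n hn (by simpa using congrArg Subtype.val hh))

/-- The image of `path v` in the chains of the quotient graph. -/
noncomputable def quotientPath (T : OrderedGTree G V E) (v : V) :
    MulAction.orbitRel.Quotient G E →₀ ZMod 2 :=
  (T.path v).mapDomain Quotient.mk''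

theorem quotient_mk_smul {X : Type*} [MulAction G X] (g : G) (x : X) :
    (Quotient.mk'' (g • x) : MulAction.orbitRel.Quotient G X) = Quotient.mk'' x :=
  Quotient.eq''.mpr ⟨g, rfl⟩

variable (T : OrderedGTree G V E)

theorem quotientPath_smul (g : G) (v : V) :
    T.quotientPath (g • v) = T.quotientPath (g • T.base) + T.quotientPath v := by
  rw [quotientPath, T.path_smul, Finsupp.mapDomain_add, ← Finsupp.mapDomain_comp]
  congr 2
  funext e
  exact quotient_mk_smul g e

theorem quotientPath_tgt (e : E) :
    T.quotientPath (T.tgt e) = T.quotientPath (T.src e) + Finsupp.single (Quotient.mk'' e) 1 := by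
  rw [quotientPath, T.path_tgt, Finsupp.mapDomain_add, Finsupp.mapDomain_single, quotientPath]

/-- The span of the closed paths in the quotient graph corresponding to the elements of `X`. -/
noncomputable def cycleSpan (X : Set G) :
    Submodule (ZMod 2) (MulAction.orbitRel.Quotient G E →₀ ZMod 2) :=
  Submodule.span (ZMod 2) ((fun g => T.quotientPath (g • T.base)) '' X)

theorem quotientPath_smul_base_mem {X : Set G} (hX : Subgroup.closure X = ⊤) (g : G) :
    T.quotientPath (g • T.base) ∈ T.cycleSpan X := by
  have hg : g ∈ Subgroup.closure X := hX ▸ Subgroup.mem_top g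
  induction hg using Subgroup.closure_induction with
  | mem x hx => exact Submodule.subset_span ⟨x, hx, rfl⟩
  | one => simp [quotientPath, T.path_base]
  | mul x y _ _ hx hy =>
    rw [mul_smul, T.quotientPath_smul]
    exact add_mem hx hy
  | inv x _ hx =>
    have h := T.quotientPath_smul x (x⁻¹ • T.base)
    rw [smul_inv_smul] at h
    have h0 : T.quotientPath T.base = 0 := by simp [quotientPath, T.path_base]
    rw [h0] at h
    rw [eq_neg_of_add_eq_zero_right h.symm]
    exact neg_mem hx

/-- The source map of the quotient graph. -/
def quotientSrc : MulAction.orbitRel.Quotient G E → MulAction.orbitRel.Quotient G V :=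
  Quotient.map' T.src (by
    rintro _ e ⟨g, rfl⟩
    exact ⟨g, (T.src_smul g e).symm⟩)

/-- The target map of the quotient graph. -/
def quotientTgt : MulAction.orbitRel.Quotient G E → MulAction.orbitRel.Quotient G V :=
  Quotient.map' T.tgt (by
    rintro _ e ⟨g, rfl⟩
    exact ⟨g, (T.tgt_smul g e).symm⟩)

/-- The boundary map of the quotient graph, modulo 2. -/
noncomputable def boundary : (MulAction.orbitRel.Quotient G E →₀ ZMod 2) →ₗ[ZMod 2]
    (MulAction.orbitRel.Quotient G V →₀ ZMod 2) :=
  Finsupp.lmapDomain (ZMod 2) (ZMod 2) T.quotientSrc +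
    Finsupp.lmapDomain (ZMod 2) (ZMod 2) T.quotientTgt

theorem boundary_single (e : MulAction.orbitRel.Quotient G E) (c : ZMod 2) :
    T.boundary (Finsupp.single e c) =
      Finsupp.single (T.quotientSrc e) c + Finsupp.single (T.quotientTgt e) c := by
  simp [boundary, Finsupp.mapDomain_single]

theorem ker_boundary_le {X : Set G} (hX : Subgroup.closure X = ⊤) :
    LinearMap.ker T.boundary ≤ T.cycleSpan X := by
  let φ : MulAction.orbitRel.Quotient G V →
      (MulAction.orbitRel.Quotient G E →₀ ZMod 2) ⧸ T.cycleSpan X :=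
    fun v => Quotient.liftOn' v (fun v => (T.cycleSpan X).mkQ (T.quotientPath v)) (by
      rintro _ v ⟨g, rfl⟩
      change (T.cycleSpan X).mkQ (T.quotientPath (g • v)) = _
      rw [T.quotientPath_smul, map_add, add_eq_right]
      exact (Submodule.Quotient.mk_eq_zero _).mpr (T.quotientPath_smul_base_mem hX g))
  have hcomp : (Finsupp.linearCombination (ZMod 2) φ).comp T.boundary = (T.cycleSpan X).mkQ := by
    refine Finsupp.lhom_ext fun e c => ?_
    induction e using Quotient.inductionOn' with
    | h e =>
    have h2 : ∀ m : (MulAction.orbitRel.Quotient G E →₀ ZMod 2), m + m = 0 := by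
      intro m; ext; simp [CharTwo.add_self_eq_zero]
    have hsum : T.quotientPath (T.src e) + T.quotientPath (T.tgt e) =
        Finsupp.single (Quotient.mk'' e) 1 := by
      rw [T.quotientPath_tgt, ← add_assoc, h2, zero_add]
    rw [LinearMap.comp_apply, boundary_single, map_add, Finsupp.linearCombination_single,
      Finsupp.linearCombination_single, ← smul_add]
    change c • ((T.cycleSpan X).mkQ (T.quotientPath (T.src e)) +
      (T.cycleSpan X).mkQ (T.quotientPath (T.tgt e))) = _
    rw [← map_add, hsum, ← map_smul, Finsupp.smul_single_one]
  intro x hx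
  rw [← Submodule.ker_mkQ (T.cycleSpan X), ← hcomp, LinearMap.mem_ker, LinearMap.comp_apply,
    LinearMap.mem_ker.mp hx, map_zero]

/-- A finite subgraph of the quotient graph has cycle rank at most the number of generators. -/
theorem card_add_one_le {X : Finset G} (hX : Subgroup.closure (X : Set G) = ⊤)
    (Φ : Finset (MulAction.orbitRel.Quotient G E)) (W : Finset (MulAction.orbitRel.Quotient G V))
    (hW : W.Nonempty) (hΦ : ∀ e ∈ Φ, T.quotientSrc e ∈ W ∧ T.quotientTgt e ∈ W) :
    Φ.card + 1 ≤ X.card + W.card := by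
  classical
  let P : Submodule (ZMod 2) (MulAction.orbitRel.Quotient G E →₀ ZMod 2) :=
    Finsupp.supported (ZMod 2) (ZMod 2) (Φ : Set _)
  let R : Submodule (ZMod 2) (MulAction.orbitRel.Quotient G V →₀ ZMod 2) :=
    Finsupp.supported (ZMod 2) (ZMod 2) (W : Set _)
  let eP := Finsupp.supportedEquivFinsupp (M := (ZMod 2)) (R := (ZMod 2))
    (Φ : Set (MulAction.orbitRel.Quotient G E))
  let eR := Finsupp.supportedEquivFinsupp (M := (ZMod 2)) (R := (ZMod 2))
    (W : Set (MulAction.orbitRel.Quotient G V))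
  have hPfin : Module.Finite (ZMod 2) P := Module.Finite.equiv eP.symm
  have hRfin : Module.Finite (ZMod 2) R := Module.Finite.equiv eR.symm
  have hP : Module.finrank (ZMod 2) P = Φ.card := by
    rw [eP.finrank_eq, Module.finrank_finsupp_self]; simp
  have hR : Module.finrank (ZMod 2) R = W.card := by
    rw [eR.finrank_eq, Module.finrank_finsupp_self]; simp
  let D := T.boundary.domRestrict P
  let aug : (MulAction.orbitRel.Quotient G V →₀ ZMod 2) →ₗ[(ZMod 2)] (ZMod 2) :=
    Finsupp.linearCombination (ZMod 2) fun _ => (1 : (ZMod 2))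
  have hrange : LinearMap.range D ≤ R ⊓ LinearMap.ker aug := by
    rintro _ ⟨⟨x, hx⟩, rfl⟩
    change T.boundary x ∈ _
    rw [Finsupp.mem_supported] at hx
    rw [← Finsupp.sum_single x, Finsupp.sum, map_sum]
    refine sum_mem fun e he => ?_
    obtain ⟨hs, ht⟩ := hΦ e (by exact_mod_cast hx he)
    rw [boundary_single]
    refine ⟨add_mem (Finsupp.single_mem_supported _ _ hs) (Finsupp.single_mem_supported _ _ ht), ?_⟩
    simp [aug, LinearMap.mem_ker, CharTwo.add_self_eq_zero]
  have hlt : R ⊓ LinearMap.ker aug < R := by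
    refine lt_of_le_of_ne inf_le_left fun h => ?_
    obtain ⟨w, hw⟩ := hW
    have : (Finsupp.single w (1 : (ZMod 2))) ∈ R ⊓ LinearMap.ker aug :=
      h.ge (Finsupp.single_mem_supported (ZMod 2) _ (by exact_mod_cast hw))
    have h1 := LinearMap.mem_ker.mp this.2
    simp [aug] at h1
  have h1 : Module.finrank (ZMod 2) (LinearMap.range D) < W.card :=
    hR ▸ Submodule.finrank_lt_finrank_of_lt (hrange.trans_lt hlt)
  have h2 : Module.finrank (ZMod 2) (LinearMap.ker D) ≤ X.card := by
    let M := T.cycleSpan (X : Set G)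
    have hMe : M = Submodule.span (ZMod 2)
        ((X.image fun g => T.quotientPath (g • T.base) : Finset _) :
          Set (MulAction.orbitRel.Quotient G E →₀ ZMod 2)) := by
      simp [M, cycleSpan]
    have hM : Module.finrank (ZMod 2) M ≤ X.card := by
      rw [hMe]
      exact (finrank_span_finset_le_card _).trans Finset.card_image_le
    have : Module.Finite (ZMod 2) M := by
      rw [hMe]; exact FiniteDimensional.span_finset _ _
    refine le_trans (LinearMap.finrank_le_finrank_of_injective
      (f := (P.subtype.comp (LinearMap.ker D).subtype).codRestrict M ?_) ?_) hM
    · rintro ⟨x, hx⟩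
      exact T.ker_boundary_le hX (LinearMap.mem_ker.mpr (LinearMap.mem_ker.mp hx))
    · intro x y hxy
      have : ((x : P) : MulAction.orbitRel.Quotient G E →₀ ZMod 2) = (y : P) :=
        congrArg (fun z : M => (z : MulAction.orbitRel.Quotient G E →₀ ZMod 2)) hxy
      exact Subtype.ext (Subtype.ext this)
  have h3 := LinearMap.finrank_range_add_finrank_ker (K := ZMod 2) (V := P)
    (V₂ := MulAction.orbitRel.Quotient G V →₀ ZMod 2) D
  omega

end OrderedGTree

namespace OrderedGTree

variable {G V E : Type*} [Group G] [MulAction G V] [MulAction G E] [LinearOrder E]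
  {T : OrderedGTree G V E}

/-- The set of edges with both endpoints in `Z`. -/
def inner (T : OrderedGTree G V E) (Z : Set V) : Set E := {e | T.src e ∈ Z ∧ T.tgt e ∈ Z}

/-- The set of edges with exactly one endpoint in `C`. -/
def cut (T : OrderedGTree G V E) (C : Set V) : Set E := {e | ¬(T.src e ∈ C ↔ T.tgt e ∈ C)}

theorem exists_finite_path_closed (T : OrderedGTree G V E) (v : V) :
    ∃ F : Set V, F.Finite ∧ v ∈ F ∧ ∀ w ∈ F, ∀ e, T.path w e ≠ 0 → e ∈ T.inner F := by
  have step : ∀ (x y : V) (e : E), (∀ f, f ≠ e → T.path y f = T.path x f) →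
      ((T.src e = x ∧ T.tgt e = y) ∨ (T.src e = y ∧ T.tgt e = x)) →
      (∃ F : Set V, F.Finite ∧ x ∈ F ∧ ∀ w ∈ F, ∀ e, T.path w e ≠ 0 → e ∈ T.inner F) →
      ∃ F : Set V, F.Finite ∧ y ∈ F ∧ ∀ w ∈ F, ∀ e, T.path w e ≠ 0 → e ∈ T.inner F := by
    rintro x y e hxy hend ⟨F, hF, hx, hcl⟩
    refine ⟨insert y F, hF.insert y, Or.inl rfl, ?_⟩
    have hmono : ∀ f, f ∈ T.inner F → f ∈ T.inner (insert y F) :=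
      fun f hf => ⟨Or.inr hf.1, Or.inr hf.2⟩
    rintro w (rfl | hw) f hf
    · by_cases hfe : f = e
      · subst hfe
        rcases hend with ⟨h1, h2⟩ | ⟨h1, h2⟩
        · exact ⟨Or.inr (h1 ▸ hx), Or.inl h2⟩
        · exact ⟨Or.inl h1, Or.inr (h2 ▸ hx)⟩
      · exact hmono f (hcl x hx f (hxy f hfe ▸ hf))
    · exact hmono f (hcl w hw f hf)
  refine T.connected {v | ∃ F : Set V, F.Finite ∧ v ∈ F ∧
    ∀ w ∈ F, ∀ e, T.path w e ≠ 0 → e ∈ T.inner F} ?_ ?_ v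
  · exact ⟨{T.base}, Set.finite_singleton _, rfl, by rintro w rfl e h; simp [T.path_base] at h⟩
  · intro e
    have h1 : ∀ f, f ≠ e → T.path (T.tgt e) f = T.path (T.src e) f := by
      intro f hf
      simp [T.path_tgt, Finsupp.single_eq_of_ne hf]
    exact ⟨step _ _ e h1 (Or.inl ⟨rfl, rfl⟩),
      step _ _ e (fun f hf => (h1 f hf).symm) (Or.inr ⟨rfl, rfl⟩)⟩

/-- `Z` is an `A`-invariant subtree containing the base vertex, with finitely many orbits of
vertices. -/
structure IsCore (T : OrderedGTree G V E) (A : Subgroup G) (Z : Set V) : Prop where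
  base_mem : T.base ∈ Z
  smul_mem : ∀ a ∈ A, ∀ v ∈ Z, a • v ∈ Z
  path_subset : ∀ v ∈ Z, ∀ e, T.path v e ≠ 0 → e ∈ T.inner Z
  finite : ((Quotient.mk'') '' Z : Set (MulAction.orbitRel.Quotient A V)).Finite

theorem exists_isCore (T : OrderedGTree G V E) {A : Subgroup G} {X : Finset A}
    (hX : Subgroup.closure (X : Set A) = ⊤) : ∃ Z, T.IsCore A Z := by
  choose F hfin hmem hcl using T.exists_finite_path_closed
  let F₀ : Set V := F T.base ∪ ⋃ x ∈ X, F (x • T.base)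
  have hF₀ : F₀.Finite :=
    (hfin _).union (Set.Finite.biUnion (Finset.finite_toSet X) fun x _ => hfin _)
  have hcl₀ : ∀ w ∈ F₀, ∀ e, T.path w e ≠ 0 → e ∈ T.inner F₀ := by
    rintro w (hw | hw) e he
    · exact ⟨Or.inl (hcl _ w hw e he).1, Or.inl (hcl _ w hw e he).2⟩
    · obtain ⟨x, hx, hw⟩ := Set.mem_iUnion₂.mp hw
      exact ⟨Or.inr (Set.mem_biUnion hx (hcl _ w hw e he).1),
        Or.inr (Set.mem_biUnion hx (hcl _ w hw e he).2)⟩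
  let Z : Set V := {v | ∃ a ∈ A, ∃ f ∈ F₀, a • f = v}
  have hFZ : F₀ ⊆ Z := fun f hf => ⟨1, one_mem A, f, hf, one_smul G f⟩
  have hZ : ∀ a ∈ A, ∀ v ∈ Z, a • v ∈ Z := by
    rintro a ha _ ⟨b, hb, f, hf, rfl⟩
    exact ⟨a * b, mul_mem ha hb, f, hf, mul_smul a b f⟩
  have hI : ∀ a ∈ A, ∀ e ∈ T.inner Z, a • e ∈ T.inner Z := by
    intro a ha e he
    exact ⟨T.src_smul a e ▸ hZ a ha _ he.1, T.tgt_smul a e ▸ hZ a ha _ he.2⟩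
  have hIF : ∀ e ∈ T.inner F₀, e ∈ T.inner Z := fun e he => ⟨hFZ he.1, hFZ he.2⟩
  have hbase : ∀ a : A, ∀ e, T.path (a • T.base) e ≠ 0 → e ∈ T.inner Z := by
    intro a
    have ha : a ∈ Subgroup.closure (X : Set A) := hX ▸ Subgroup.mem_top a
    induction ha using Subgroup.closure_induction with
    | mem x hx =>
      exact fun e he => hIF e (hcl₀ _ (Or.inr (Set.mem_biUnion hx (hmem _))) e he)
    | one => simp [T.path_base]
    | mul x y _ _ hx hy =>
      intro e he
      rw [mul_smul] at he
      rw [show T.path (x • y • T.base) e = _ from T.path_smul_apply (x : G) (y • T.base) e] at he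
      by_cases h0 : T.path ((x : G) • T.base) e = 0
      · rw [h0, zero_add] at he
        simpa using hI x x.2 _ (hy _ he)
      · exact hx e h0
    | inv x _ hx =>
      intro e he
      have := hx ((x : G) • e) ((T.path_inv_smul_base (x : G) e).symm.trans_ne he)
      simpa using hI _ (inv_mem x.2) _ this
  refine ⟨Z, hFZ (Or.inl (hmem _)), hZ, ?_, ?_⟩
  · rintro _ ⟨a, ha, f, hf, rfl⟩ e he
    rw [T.path_smul_apply] at he
    by_cases h0 : T.path (a • T.base) e = 0
    · rw [h0, zero_add] at he
      simpa using hI a ha _ (hIF _ (hcl₀ f hf _ he))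
    · exact hbase ⟨a, ha⟩ e h0
  · refine (hF₀.image Quotient.mk'').subset ?_
    rintro _ ⟨_, ⟨a, ha, f, hf, rfl⟩, rfl⟩
    exact ⟨f, hf, (quotient_mk_smul (⟨a, ha⟩ : A) f).symm⟩

theorem finite_and_ncard_add_one_le {α : Type*} {S : Set α} {m : ℕ}
    (h : ∀ F : Finset α, (F : Set α) ⊆ S → F.card + 1 ≤ m) : S.Finite ∧ S.ncard + 1 ≤ m := by
  have hfin : S.Finite := by
    by_contra hinf
    obtain ⟨F, hF, hc⟩ := Set.Infinite.exists_subset_card_eq hinf m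
    have := h F hF
    omega
  refine ⟨hfin, ?_⟩
  rw [Set.ncard_eq_toFinset_card S hfin]
  exact h _ (by simp)

variable {A : Subgroup G} {Z : Set V}

theorem finite_of_injOn {Y Q : Type*} [MulAction A Y] {S U : Set Y}
    (hU : ((Quotient.mk'') '' U : Set (MulAction.orbitRel.Quotient A Y)).Finite) (hSU : S ⊆ U)
    (f : Y → Q) (hf : (f '' S).Finite)
    (hS : ∀ y ∈ S, ∀ a : A, a • y ∈ S → f (a • y) = f y → a = 1) : S.Finite := by
  refine Set.Finite.of_finite_image (f := fun y => (f y,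
    (Quotient.mk'' y : MulAction.orbitRel.Quotient A Y))) ?_ ?_
  · refine (hf.prod hU).subset ?_
    rintro _ ⟨y, hy, rfl⟩
    exact ⟨⟨y, hy, rfl⟩, ⟨y, hSU hy, rfl⟩⟩
  · intro y hy z hz hyz
    rw [Prod.mk.injEq] at hyz
    obtain ⟨a, ha⟩ := (MulAction.orbitRel_apply.mp (Quotient.eq''.mp hyz.2))
    change a • z = y at ha
    subst ha
    rw [hS z hz a hy hyz.1, one_smul]

theorem FreeOn.finite_inner_inter_cut (hA : T.FreeOn A)
    (hfin : ((Quotient.mk'') '' T.inner Z : Set (MulAction.orbitRel.Quotient A E)).Finite)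
    {C : Set V} (hC : C.Finite) : (T.inner Z ∩ T.cut C).Finite := by
  have key : ∀ f : E → V, (∀ (g : G) e, f (g • e) = g • f e) →
      {e ∈ T.inner Z | f e ∈ C}.Finite := by
    intro f hf
    refine finite_of_injOn hfin (fun e he => he.1) f
      (hC.subset (by rintro _ ⟨e, he, rfl⟩; exact he.2)) ?_
    intro e _ a _ hae
    have : (a : G) • f e = f e := by rw [← hf]; exact hae
    exact Subtype.ext (hA a a.2 _ this)
  refine ((key T.src T.src_smul).union (key T.tgt T.tgt_smul)).subset ?_
  rintro e ⟨he, hcut⟩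
  by_cases hs : T.src e ∈ C
  · exact Or.inl ⟨he, hs⟩
  · exact Or.inr ⟨he, by_contra fun ht => hcut ⟨fun h => absurd h hs, fun h => absurd h ht⟩⟩

namespace IsCore

theorem inner_orbits (hZ : T.IsCore A Z) {X : Finset A}
    (hX : Subgroup.closure (X : Set A) = ⊤) :
    ((Quotient.mk'') '' T.inner Z : Set (MulAction.orbitRel.Quotient A E)).Finite ∧
    ((Quotient.mk'') '' T.inner Z : Set (MulAction.orbitRel.Quotient A E)).ncard + 1 ≤
      X.card + ((Quotient.mk'') '' Z : Set (MulAction.orbitRel.Quotient A V)).ncard := by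
  refine finite_and_ncard_add_one_le fun F hF => ?_
  rw [Set.ncard_eq_toFinset_card _ hZ.finite]
  refine (T.restrict A).card_add_one_le hX F _
    ⟨Quotient.mk'' T.base, by simpa using ⟨_, hZ.base_mem, rfl⟩⟩ ?_
  intro e he
  obtain ⟨e, hi, rfl⟩ := hF he
  rw [Set.Finite.mem_toFinset, Set.Finite.mem_toFinset]
  exact ⟨⟨_, hi.1, rfl⟩, ⟨_, hi.2, rfl⟩⟩

open Classical in
theorem sum_path (hZ : T.IsCore A Z) {C : Set V} {D : Finset E}
    (hD : (D : Set E) = T.inner Z ∩ T.cut C) {v : V} (hv : v ∈ Z) :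
    ∑ e ∈ D, T.path v e = (if v ∈ C then 1 else 0) + (if T.base ∈ C then 1 else 0) := by
  have hD' : ∀ e, e ∈ D ↔ e ∈ T.inner Z ∩ T.cut C := fun e => by rw [← hD]; rfl
  rw [← T.sum_cut_finset (fun v => if v ∈ C then 1 else 0) v D]
  · refine Finset.sum_congr rfl fun e he => ?_
    have hc : ¬(T.src e ∈ C ↔ T.tgt e ∈ C) := ((hD' e).mp he).2
    by_cases hs : T.src e ∈ C <;> by_cases ht : T.tgt e ∈ C
    · exact absurd (iff_of_true hs ht) hc
    · simp [hs, ht]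
    · simp [hs, ht]
    · exact absurd (iff_of_false hs ht) hc
  · intro e he hne
    refine (hD' e).mpr ⟨hZ.path_subset v hv e he, fun hiff => hne ?_⟩
    simp [hiff]

open Classical in
theorem sum_end (hZ : T.IsCore A Z) (hA : T.FreeOn A) {C : Set V} (hC : C.Finite) {D : Finset E}
    (hD : (D : Set E) = T.inner Z ∩ T.cut C) {ξ : E → ZMod 2} (hξ : T.IsEnd A ξ) :
    ∑ e ∈ D, ξ e = if T.base ∈ C then 1 else 0 := by
  obtain ⟨h, hh, h1, hl, -⟩ := hξ
  obtain ⟨n, hn, hn'⟩ := ((hA.eventually_notMem hh h1 T.base hC).and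
    ((Filter.eventually_all_finset D).mpr fun e _ => hl e)).exists
  rw [← Finset.sum_congr rfl hn', hZ.sum_path hD (hZ.smul_mem _ (pow_mem hh n) _ hZ.base_mem)]
  simp [hn]

theorem isEnd_subset (hZ : T.IsCore A Z) {ξ : E → ZMod 2} (hξ : T.IsEnd A ξ) {e : E}
    (he : ξ e ≠ 0) : e ∈ T.inner Z := by
  obtain ⟨h, hh, h1, hl, -⟩ := hξ
  obtain ⟨n, hn⟩ := (hl e).exists
  exact hZ.path_subset _ (hZ.smul_mem _ (pow_mem hh n) _ hZ.base_mem) e (hn ▸ he)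

theorem bridges_subset (hZ : T.IsCore A Z) : T.bridges A ⊆ T.inner Z := by
  rintro e ⟨ξ, η, hξ, hη, he, -⟩
  by_cases h0 : ξ e = 0
  · exact hZ.isEnd_subset hη fun h => he (h0.trans h.symm)
  · exact hZ.isEnd_subset hξ h0

/-- The stabilizers of the fibres of `bridgePath` are nontrivial if there are bridges. -/
theorem exists_bridgePath_smul (hZ : T.IsCore A Z) (hA : T.FreeOn A)
    (hfin : ((Quotient.mk'') '' T.inner Z : Set (MulAction.orbitRel.Quotient A E)).Finite)
    (hne : (T.bridges A).Nonempty) {v : V} (hv : v ∈ Z) :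
    ∃ a ∈ A, a ≠ 1 ∧ T.bridgePath A (a • v) = T.bridgePath A v := by
  classical
  by_contra hc
  push Not at hc
  let C : Set V := {w ∈ Z | T.bridgePath A w = T.bridgePath A v}
  have hC : C.Finite := by
    refine finite_of_injOn (A := A) hZ.finite (fun w hw => hw.1) (fun _ => ())
      (Set.toFinite _) ?_
    intro w hw a haw _
    by_contra ha
    refine hc a a.2 (by simpa using ha) ?_
    exact (bridgePath_smul a.2 hw.2).symm.trans haw.2
  have hDfin := hA.finite_inner_inter_cut hfin hC
  have hD : (hDfin.toFinset : Set E) = T.inner Z ∩ T.cut C := hDfin.coe_toFinset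
  have hvC : v ∈ C := ⟨hv, rfl⟩
  have hDne : hDfin.toFinset.Nonempty := by
    rw [Finset.nonempty_iff_ne_empty]
    intro h0
    obtain ⟨_, ξ, _, hξ, -, -⟩ := hne
    have h1 := hZ.sum_path hD hv
    have h2 := hZ.sum_end hA hC hD hξ
    rw [h0, Finset.sum_empty] at h1 h2
    rw [if_pos hvC, ← h2] at h1
    simp at h1
  obtain ⟨e, he, hmin⟩ := hDfin.toFinset.exists_min_image id hDne
  have he' := hDfin.mem_toFinset.mp he
  have heB : e ∈ T.bridges A := by
    by_contra hnB
    have heq := bridgePath_src_eq_tgt hnB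
    exact he'.2 ⟨fun h => ⟨he'.1.2, heq.symm.trans h.2⟩, fun h => ⟨he'.1.1, heq.trans h.2⟩⟩
  obtain ⟨ξ, η, hξ, hη, hmem, hmax⟩ := heB
  have hsum : ∑ f ∈ hDfin.toFinset, (ξ f + η f) = 0 := by
    rw [Finset.sum_add_distrib, hZ.sum_end hA hC hD hξ, hZ.sum_end hA hC hD hη,
      CharTwo.add_self_eq_zero]
  rw [Finset.sum_eq_single_of_mem e he] at hsum
  · exact hmem (CharTwo.add_eq_zero.mp hsum)
  · intro f hf hfe
    by_contra h0
    have hfm : ξ f ≠ η f := fun h => h0 (CharTwo.add_eq_zero.mpr h)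
    exact hfe (le_antisymm (hmax hfm) (hmin f hf))

end IsCore

/-- The edge `e` is not a bridge and is the first edge on the way from `v` to the tame end of `A`
which is not separated from `v` by bridges. -/
def IsFirst (T : OrderedGTree G V E) (A : Subgroup G) (v : V) (e : E) : Prop :=
  e ∉ T.bridges A ∧ (T.src e = v ∨ T.tgt e = v) ∧
    ∃ ξ, T.IsEnd A ξ ∧ (∀ f ∈ T.bridges A, ξ f = T.path v f) ∧ ξ e ≠ T.path v e

theorem IsFirst.smul {v : V} {e : E} (h : T.IsFirst A v e) {a : G} (ha : a ∈ A) :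
    T.IsFirst A (a • v) (a • e) := by
  obtain ⟨hB, hend, ξ, hξ, heq, hne⟩ := h
  refine ⟨fun h => hB ((smul_mem_bridges_iff ha).mp h), ?_, _,
    hξ.smul fun h hh => mul_mem (mul_mem ha hh) (inv_mem ha), ?_, ?_⟩
  · rw [T.src_smul, T.tgt_smul]
    exact hend.imp (congrArg _) (congrArg _)
  · intro f hf
    rw [T.path_smul_apply a v, heq _ (smul_mem_bridges_of_mem (inv_mem ha) hf)]
  · rw [T.path_smul_apply a v]
    simpa using hne

theorem IsFirst.unique {v w : V} {e : E} (hv : T.IsFirst A v e) (hw : T.IsFirst A w e) :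
    v = w := by
  obtain ⟨hB, hend, ξ, hξ, heq, hne⟩ := hv
  obtain ⟨-, hend', η, hη, heq', hne'⟩ := hw
  by_contra hvw
  have hb := bridgePath_src_eq_tgt hB
  have hpath : T.path (T.tgt e) e = T.path (T.src e) e + 1 := by simp [T.path_tgt]
  have hbvw : T.bridgePath A v = T.bridgePath A w ∧ T.path v e ≠ T.path w e := by
    rcases hend with rfl | rfl <;> rcases hend' with rfl | rfl
    · exact absurd rfl hvw
    · exact ⟨hb, by simp [hpath]⟩
    · exact ⟨hb.symm, by simp [hpath]⟩
    · exact absurd rfl hvw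
  obtain rfl : ξ = η := hξ.eq_of_eqOn_bridges hη fun f hf => by
    rw [heq f hf, heq' f hf]
    exact congrFun hbvw.1 ⟨f, hf⟩
  revert hne hne'
  have := hbvw.2
  revert this
  generalize ξ e = a
  generalize T.path v e = b
  generalize T.path w e = c
  revert a b c
  decide

theorem IsCore.exists_isFirst (hZ : T.IsCore A Z) (hA : T.FreeOn A)
    (hfin : ((Quotient.mk'') '' T.inner Z : Set (MulAction.orbitRel.Quotient A E)).Finite)
    (hne : (T.bridges A).Nonempty) {v : V} (hv : v ∈ Z) : ∃ e ∈ T.inner Z, T.IsFirst A v e := by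
  classical
  obtain ⟨a, ha, a1, hav⟩ := hZ.exists_bridgePath_smul hA hfin hne hv
  obtain ⟨-, ξ, -, -, hξ, heq⟩ := exists_isEnd_of_bridgePath_smul hA ha a1 hav
  have hC : ({v} : Set V).Finite := Set.finite_singleton v
  have hDfin := hA.finite_inner_inter_cut hfin hC
  have hD : (hDfin.toFinset : Set E) = T.inner Z ∩ T.cut {v} := hDfin.coe_toFinset
  obtain ⟨e, he, hne⟩ : ∃ e ∈ hDfin.toFinset, ξ e ≠ T.path v e := by
    by_contra hc
    push Not at hc
    have h1 := hZ.sum_path hD hv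
    have h2 := hZ.sum_end hA hC hD hξ
    rw [← Finset.sum_congr rfl hc, h2] at h1
    simp at h1
  obtain ⟨hin, hcut⟩ := hDfin.mem_toFinset.mp he
  refine ⟨e, hin, fun hB => hne (heq e hB), ?_, ξ, hξ, heq, hne⟩
  by_contra hend
  push Not at hend
  exact hcut ⟨fun h => absurd h hend.1, fun h => absurd h hend.2⟩

/-- The number of orbits of bridges is at most the reduced rank. -/
theorem bridgeOrbits_ncard_le (T : OrderedGTree G V E) {A : Subgroup G} (hA : T.FreeOn A)
    {X : Finset A} (hX : Subgroup.closure (X : Set A) = ⊤) :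
    (T.bridgeOrbits A).Finite ∧ (T.bridgeOrbits A).ncard ≤ X.card - 1 := by
  rcases (T.bridges A).eq_empty_or_nonempty with hemp | hne
  · simp [bridgeOrbits, hemp]
  obtain ⟨Z, hZ⟩ := T.exists_isCore hX
  obtain ⟨hfin, hcard⟩ := hZ.inner_orbits hX
  have hsub : T.bridgeOrbits A ⊆ (Quotient.mk'') '' T.inner Z := Set.image_mono hZ.bridges_subset
  refine ⟨hfin.subset hsub, ?_⟩
  have : Nonempty E := ⟨hne.some⟩
  choose! f hfin' hfirst using fun v hv => hZ.exists_isFirst hA hfin hne (v := v) hv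
  have hrep : ∀ x ∈ ((Quotient.mk'') '' Z : Set (MulAction.orbitRel.Quotient A V)),
      ∃ v ∈ Z, (Quotient.mk'' v : MulAction.orbitRel.Quotient A V) = x := fun x hx => hx
  have : Nonempty V := ⟨T.base⟩
  choose! r hr hr' using hrep
  have hle : ((Quotient.mk'') '' Z : Set (MulAction.orbitRel.Quotient A V)).ncard ≤
      (((Quotient.mk'') '' T.inner Z : Set (MulAction.orbitRel.Quotient A E)) \
        T.bridgeOrbits A).ncard := by
    refine Set.ncard_le_ncard_of_injOn (fun x => Quotient.mk'' (f (r x))) ?_ ?_ hfin.sdiff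
    · intro x hx
      refine ⟨⟨_, hfin' _ (hr x hx), rfl⟩, ?_⟩
      rintro ⟨e, he, hex⟩
      obtain ⟨a, ha⟩ := MulAction.orbitRel_apply.mp (Quotient.eq''.mp hex)
      refine (hfirst _ (hr x hx)).1 ((smul_mem_bridges_iff a.2).mp ?_)
      rwa [show (a : G) • f (r x) = e from ha]
    · intro x hx y hy hxy
      obtain ⟨a, ha⟩ := MulAction.orbitRel_apply.mp (Quotient.eq''.mp hxy)
      have h1 := (hfirst _ (hr y hy)).smul a.2
      rw [show (a : G) • f (r y) = f (r x) from ha] at h1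
      have h2 : r x = a • r y := (hfirst _ (hr x hx)).unique h1
      rw [← hr' x hx, ← hr' y hy, h2, quotient_mk_smul]
  have hsum := Set.ncard_sdiff_add_ncard_of_subset hsub hfin
  omega

end OrderedGTree

theorem grank_le_card {H : Type*} [Group H] {X : Finset H}
    (hX : Subgroup.closure (X : Set H) = ⊤) : grank H ≤ X.card :=
  sInf_le ⟨X, hX, rfl⟩

theorem grank_sub_one_le {H : Type*} [Group H] {X : Finset H}
    (hX : Subgroup.closure (X : Set H) = ⊤) {n : ℕ} (hn : X.card ≤ n + 1) :
    grank H - 1 ≤ n := by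
  rw [tsub_le_iff_right]
  refine (grank_le_card hX).trans ?_
  exact_mod_cast hn

theorem le_grank_sub_one {H : Type*} [Group H] {n : ℕ}
    (h : ∀ X : Finset H, Subgroup.closure (X : Set H) = ⊤ → n ≤ X.card - 1) :
    (n : ℝ≥0∞) ≤ grank H - 1 := by
  rcases n.eq_zero_or_pos with rfl | hpos
  · simp
  refine ENNReal.le_sub_of_add_le_right ENNReal.one_ne_top (le_sInf ?_)
  rintro _ ⟨X, hX, rfl⟩
  have := h X hX
  exact_mod_cast (show n + 1 ≤ X.card by omega)

theorem grank_le_of_mulEquiv {H K : Type*} [Group H] [Group K] (f : H ≃* K) :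
    grank K ≤ grank H := by
  classical
  refine le_sInf ?_
  rintro _ ⟨X, hX, rfl⟩
  refine (grank_le_card (X := X.image f) ?_).trans (by exact_mod_cast Finset.card_image_le)
  rw [Finset.coe_image]
  have := MonoidHom.map_closure f.toMonoidHom (X : Set H)
  rw [hX, Subgroup.map_top_of_surjective f.toMonoidHom f.surjective] at this
  exact this.symm

theorem Subgroup.mem_map_conj {G : Type*} [Group G] {H : Subgroup G} {g x : G} :
    x ∈ H.map (MulAut.conj g).toMonoidHom ↔ g⁻¹ * x * g ∈ H := by
  constructor
  · rintro ⟨y, hy, rfl⟩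
    simpa [mul_assoc] using hy
  · intro h
    exact ⟨_, h, by simp [mul_assoc]⟩

theorem IsFreeGroup.of_le {G : Type*} [Group G] {H K : Subgroup G} [IsFreeGroup K] (h : H ≤ K) :
    IsFreeGroup H :=
  IsFreeGroup.ofMulEquiv (Subgroup.subgroupOfEquivOfLe h)

namespace OrderedGTree

variable {G V E : Type*} [Group G] [MulAction G V] [MulAction G E] [LinearOrder E]

/-- The map from the `A ⊓ s B s⁻¹`-orbits to pairs of an `A`-orbit and a `B`-orbit. -/
def orbitPair (E : Type*) [MulAction G E] (A B : Subgroup G) (s : G) :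
    MulAction.orbitRel.Quotient ↥(A ⊓ B.map (MulAut.conj s).toMonoidHom) E →
      MulAction.orbitRel.Quotient A E × MulAction.orbitRel.Quotient B E :=
  fun x => Quotient.liftOn' x (fun e => (Quotient.mk'' e, Quotient.mk'' (s⁻¹ • e))) (by
    rintro _ e ⟨⟨h, hA, hB⟩, rfl⟩
    have hB' := Subgroup.mem_map_conj.mp hB
    refine Prod.ext (quotient_mk_smul (⟨h, hA⟩ : A) e) ?_
    change Quotient.mk'' (s⁻¹ • h • e) = _
    rw [← quotient_mk_smul (⟨s⁻¹ * h * s, hB'⟩ : B) (s⁻¹ • e)]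
    congr 1
    change s⁻¹ • h • e = (s⁻¹ * h * s) • s⁻¹ • e
    simp [mul_smul])

variable (T : OrderedGTree G V E) {A B : Subgroup G}

theorem eq_of_orbitPair_eq (T : OrderedGTree G V E) {s s' : G} {e e' : E}
    (h : orbitPair E A B s (Quotient.mk'' e) = orbitPair E A B s' (Quotient.mk'' e')) :
    ∃ a ∈ A, ∃ b ∈ B, a • e' = e ∧ s = a * s' * b ∧ a = s * b⁻¹ * s'⁻¹ := by
  obtain ⟨h1, h2⟩ := Prod.mk.injEq _ _ _ _ ▸ h
  obtain ⟨a, ha⟩ := MulAction.orbitRel_apply.mp (Quotient.eq''.mp h1)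
  obtain ⟨b, hb⟩ := MulAction.orbitRel_apply.mp (Quotient.eq''.mp h2)
  change (a : G) • e' = e at ha
  change (b : G) • s'⁻¹ • e' = s⁻¹ • e at hb
  have hab : (a : G) = s * b * s'⁻¹ := by
    refine T.smul_edge_injective e' ?_
    change (a : G) • e' = (s * b * s'⁻¹) • e'
    rw [mul_smul, mul_smul, hb, smul_inv_smul, ha]
  refine ⟨a, a.2, (b : G)⁻¹, inv_mem b.2, ha, ?_, by simpa using hab⟩
  rw [hab]
  group

theorem orbitPair_injective (T : OrderedGTree G V E) (s : G) :
    Function.Injective (orbitPair E A B s) := by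
  intro x y hxy
  induction x using Quotient.inductionOn' with | h e =>
  induction y using Quotient.inductionOn' with | h e' =>
  obtain ⟨a, ha, b, hb, rfl, -, hab⟩ := T.eq_of_orbitPair_eq hxy
  have hmem : a ∈ A ⊓ B.map (MulAut.conj s).toMonoidHom := by
    refine ⟨ha, Subgroup.mem_map_conj.mpr ?_⟩
    rw [hab]
    simpa [mul_assoc] using hb
  exact quotient_mk_smul (⟨a, hmem⟩ : ↥(A ⊓ B.map (MulAut.conj s).toMonoidHom)) e'

theorem mapsTo_orbitPair (s : G) :
    Set.MapsTo (orbitPair E A B s) (T.bridgeOrbits (A ⊓ B.map (MulAut.conj s).toMonoidHom))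
      (T.bridgeOrbits A ×ˢ T.bridgeOrbits B) := by
  rintro _ ⟨e, he, rfl⟩
  refine ⟨⟨e, T.bridges_mono inf_le_left he, rfl⟩, ⟨s⁻¹ • e, smul_mem_bridges ?_ he, rfl⟩⟩
  rintro h ⟨-, hB⟩
  simpa using Subgroup.mem_map_conj.mp hB

theorem sum_bridgeOrbits_le (hAfin : (T.bridgeOrbits A).Finite) (hBfin : (T.bridgeOrbits B).Finite)
    {S : Set G} (hS : ∀ g : G, ∃! s, s ∈ S ∧ ∃ a ∈ A, ∃ b ∈ B, g = a * s * b) (t : Finset S) :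
    ∑ s ∈ t, (T.bridgeOrbits (A ⊓ B.map (MulAut.conj (s : G)).toMonoidHom)).ncard ≤
      (T.bridgeOrbits A).ncard * (T.bridgeOrbits B).ncard := by
  classical
  have hfin : (T.bridgeOrbits A ×ˢ T.bridgeOrbits B).Finite := hAfin.prod hBfin
  let P : S → Set (MulAction.orbitRel.Quotient A E × MulAction.orbitRel.Quotient B E) := fun s =>
    orbitPair E A B s '' T.bridgeOrbits (A ⊓ B.map (MulAut.conj (s : G)).toMonoidHom)
  have hPsub : ∀ s, P s ⊆ T.bridgeOrbits A ×ˢ T.bridgeOrbits B :=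
    fun s => (T.mapsTo_orbitPair (s : G)).image_subset
  have hPfin : ∀ s, (P s).Finite := fun s => hfin.subset (hPsub s)
  have hcard : ∀ s : S, (T.bridgeOrbits (A ⊓ B.map (MulAut.conj (s : G)).toMonoidHom)).ncard =
      (hPfin s).toFinset.card := by
    intro s
    rw [← Set.ncard_eq_toFinset_card (P s) (hPfin s),
      Set.ncard_image_of_injective _ (T.orbitPair_injective (s : G))]
  rw [← Set.ncard_prod, Set.ncard_eq_toFinset_card _ hfin, Finset.sum_congr rfl fun s _ => hcard s,
    ← Finset.card_biUnion]
  · refine Finset.card_le_card fun x hx => ?_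
    obtain ⟨s, -, hs⟩ := Finset.mem_biUnion.mp hx
    exact hfin.mem_toFinset.mpr (hPsub s ((hPfin s).mem_toFinset.mp hs))
  · intro s _ s' _ hne
    rw [Function.onFun, Finset.disjoint_left]
    intro x hx hx'
    obtain ⟨y, hy, rfl⟩ := (hPfin s).mem_toFinset.mp hx
    obtain ⟨y', hy', heq⟩ := (hPfin s').mem_toFinset.mp hx'
    induction y using Quotient.inductionOn' with | h e =>
    induction y' using Quotient.inductionOn' with | h e' =>
    obtain ⟨a, ha, b, hb, -, hab, -⟩ := T.eq_of_orbitPair_eq heq.symm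
    exact hne (Subtype.ext ((hS s).unique ⟨s.2, 1, one_mem A, 1, one_mem B, by simp⟩
      ⟨s'.2, a, ha, b, hb, hab⟩))

theorem finite_bridgeOrbits_inf (hAfin : (T.bridgeOrbits A).Finite)
    (hBfin : (T.bridgeOrbits B).Finite) (s : G) :
    (T.bridgeOrbits (A ⊓ B.map (MulAut.conj s).toMonoidHom)).Finite :=
  Set.Finite.of_finite_image ((hAfin.prod hBfin).subset (T.mapsTo_orbitPair s).image_subset)
    (T.orbitPair_injective s).injOn

/-- The strengthened Hanna Neumann inequality for subgroups acting freely on an ordered tree. -/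
theorem tsum_grank_sub_one_le [Group.FG A] [Group.FG B] [IsFreeGroup A] (hA : T.FreeOn A)
    (hB : T.FreeOn B) {S : Set G}
    (hS : ∀ g : G, ∃! s, s ∈ S ∧ ∃ a ∈ A, ∃ b ∈ B, g = a * s * b) :
    ∑' s : S, (grank ↥(A ⊓ B.map (MulAut.conj (s : G)).toMonoidHom) - 1) ≤
      (grank A - 1) * (grank B - 1) := by
  obtain ⟨X, hX⟩ := Group.fg_def.mp ‹Group.FG A›
  obtain ⟨Y, hY⟩ := Group.fg_def.mp ‹Group.FG B›
  have hAfin := (T.bridgeOrbits_ncard_le hA hX).1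
  have hBfin := (T.bridgeOrbits_ncard_le hB hY).1
  have hle : ∀ s : S, grank ↥(A ⊓ B.map (MulAut.conj (s : G)).toMonoidHom) - 1 ≤
      ((T.bridgeOrbits (A ⊓ B.map (MulAut.conj (s : G)).toMonoidHom)).ncard : ℝ≥0∞) := by
    intro s
    have : IsFreeGroup ↥(A ⊓ B.map (MulAut.conj (s : G)).toMonoidHom) :=
      IsFreeGroup.of_le inf_le_left
    obtain ⟨W, hW, hcard⟩ := exists_generators (T := T)
      (H := A ⊓ B.map (MulAut.conj (s : G)).toMonoidHom) (fun h hh => hA h hh.1)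
      (T.finite_bridgeOrbits_inf hAfin hBfin s)
    exact grank_sub_one_le hW hcard
  calc _ ≤ ∑' s : S,
          ((T.bridgeOrbits (A ⊓ B.map (MulAut.conj (s : G)).toMonoidHom)).ncard : ℝ≥0∞) :=
        ENNReal.tsum_le_tsum hle
    _ ≤ ((T.bridgeOrbits A).ncard : ℝ≥0∞) * (T.bridgeOrbits B).ncard := by
        rw [ENNReal.tsum_eq_iSup_sum]
        exact iSup_le fun t => by exact_mod_cast T.sum_bridgeOrbits_le hAfin hBfin hS t
    _ ≤ _ := mul_le_mul' (le_grank_sub_one fun X hX => (T.bridgeOrbits_ncard_le hA hX).2)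
        (le_grank_sub_one fun X hX => (T.bridgeOrbits_ncard_le hB hX).2)

end OrderedGTree

theorem exists_grank_inf_le {G : Type*} [Group G] {A B : Subgroup G} {S : Set G}
    (hS : ∀ g : G, ∃! s, s ∈ S ∧ ∃ a ∈ A, ∃ b ∈ B, g = a * s * b) :
    ∃ s : S, grank ↥(A ⊓ B) ≤ grank ↥(A ⊓ B.map (MulAut.conj (s : G)).toMonoidHom) := by
  obtain ⟨s, ⟨hs, a, ha, b, hb, h1⟩, -⟩ := hS 1
  refine ⟨⟨s, hs⟩, ?_⟩
  have heq : (A ⊓ B.map (MulAut.conj s).toMonoidHom).map (MulAut.conj a).toMonoidHom = A ⊓ B := by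
    ext x
    have hsb : s = a⁻¹ * b⁻¹ := by
      rw [eq_mul_inv_iff_mul_eq]
      exact eq_inv_of_mul_eq_one_right (by rw [← mul_assoc, ← h1])
    rw [Subgroup.mem_map_conj, Subgroup.mem_inf, Subgroup.mem_inf, Subgroup.mem_map_conj, hsb,
      A.mul_mem_cancel_right ha, A.mul_mem_cancel_left (inv_mem ha)]
    have : (a⁻¹ * b⁻¹)⁻¹ * (a⁻¹ * x * a) * (a⁻¹ * b⁻¹) = b * x * b⁻¹ := by group
    rw [this, B.mul_mem_cancel_right (inv_mem hb), B.mul_mem_cancel_left hb]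
  rw [← heq]
  exact grank_le_of_mulEquiv ((MulAut.conj a).subgroupMap _)

/-- The sign function of a left-invariant linear order on a group. -/
structure SignFunction (H : Type*) [Group H] where
  /-- The sign of an element: `1` on the positive cone and `-1` on its inverse. -/
  sign : H → ℤ
  sign_of_ne_one : ∀ x, x ≠ 1 → sign x = 1 ∨ sign x = -1
  sign_inv : ∀ x, sign x⁻¹ = -sign x
  sign_mul : ∀ x y, sign x = 1 → sign y = 1 → sign (x * y) = 1

open Classical in
theorem SignFunction.nonempty_of_leftOrder {H : Type*} [Group H] (le : H → H → Prop)
    (hle : IsLinearOrder H le) (hmul : ∀ a b c : H, le a b → le (c * a) (c * b)) :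
    Nonempty (SignFunction H) := by
  have htotal : ∀ a b, le a b ∨ le b a := fun a b => Std.Total.total a b
  have hanti : ∀ a b, le a b → le b a → a = b := fun a b => antisymm
  have htrans : ∀ a b c, le a b → le b c → le a c := fun a b c => trans_of le
  have hinv : ∀ x, le 1 x → le x⁻¹ 1 := fun x hx => by simpa using hmul _ _ x⁻¹ hx
  have hinv' : ∀ x, le 1 x⁻¹ → le x 1 := fun x hx => by simpa using hmul _ _ x hx
  have hpos : ∀ x, (if x = 1 then (0 : ℤ) else if le 1 x then 1 else -1) = 1 ↔
      x ≠ 1 ∧ le 1 x := by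
    intro x; split_ifs <;> simp_all
  refine ⟨⟨fun x => if x = 1 then 0 else if le 1 x then 1 else -1, ?_, ?_, ?_⟩⟩
  · intro x hx
    simp only [hx, if_false]
    split_ifs <;> simp
  · intro x
    by_cases hx : x = 1
    · simp [hx]
    · simp only [inv_eq_one, hx, if_false]
      by_cases h : le 1 x
      · have : ¬ le 1 x⁻¹ := fun h' => hx (hanti _ _ (hinv' x h') h)
        simp [h, this]
      · have : le 1 x⁻¹ := by
          rcases htotal 1 x with h' | h'
          · exact absurd h' h
          · simpa using hmul _ _ x⁻¹ h'
        simp [h, this]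
  · intro x y hx hy
    simp only [hpos] at hx hy ⊢
    have hxy : le x (x * y) := by simpa using hmul _ _ x hy.2
    refine ⟨fun h => hx.1 (hanti _ _ (h ▸ hxy) hx.2), htrans _ _ _ hx.2 hxy⟩

/-- The sign of the comparison of two indices. -/
def indexSign {ι : Type*} [LinearOrder ι] (i j : ι) : ℤ :=
  if i < j then 1 else if j < i then -1 else 0

section indexSign

variable {ι : Type*} [LinearOrder ι]

@[simp]
theorem indexSign_self (i : ι) : indexSign i i = 0 := by simp [indexSign]

theorem indexSign_swap (i j : ι) : indexSign j i = -indexSign i j := by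
  rcases lt_trichotomy i j with h | h | h
  · simp [indexSign, h, h.not_gt]
  · simp [h]
  · simp [indexSign, h, h.not_gt]

theorem indexSign_of_ne {i j : ι} (h : i ≠ j) : indexSign i j = 1 ∨ indexSign i j = -1 := by
  rcases lt_or_gt_of_ne h with h | h <;> simp [indexSign, h, h.not_gt]

theorem abs_indexSign_le (i j : ι) : |indexSign i j| ≤ 1 := by
  rcases eq_or_ne i j with rfl | h
  · simp
  · rcases indexSign_of_ne h with h | h <;> simp [h]

theorem abs_indexSign_cycle_le {i j k : ι} (hij : i ≠ j) (hik : i ≠ k) (hjk : j ≠ k) :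
    |indexSign j k + indexSign i j - indexSign i k| ≤ 1 := by
  unfold indexSign
  split_ifs <;> first | (exfalso; order) | norm_num

end indexSign

namespace FreeProductOrder

open Monoid.CoprodI

variable {ι : Type*} {Gs : ι → Type*}

/-- The sign of the comparison of an index with the index of the first letter of a list. -/
def headSign [LinearOrder ι] (i : ι) : List (Σ i, Gs i) → ℤ
  | [] => 0
  | x :: _ => indexSign i x.1

theorem abs_headSign_le [LinearOrder ι] (i : ι) (u : List (Σ i, Gs i)) :
    |headSign i u| ≤ 1 := by
  cases u with
  | nil => simp [headSign]
  | cons x u => exact abs_indexSign_le _ _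

variable [∀ i, Group (Gs i)]

/-- A list of letters is reduced if no letter is trivial and adjacent letters come from
distinct factors. -/
def Reduced (u : List (Σ i, Gs i)) : Prop :=
  (∀ l ∈ u, l.2 ≠ 1) ∧ u.IsChain fun l l' => l.1 ≠ l'.1

theorem Reduced.tail {x : Σ i, Gs i} {u : List (Σ i, Gs i)} (h : Reduced (x :: u)) :
    Reduced u :=
  ⟨fun l hl => h.1 l (List.mem_cons_of_mem _ hl), h.2.tail⟩

theorem Reduced.head {x : Σ i, Gs i} {u : List (Σ i, Gs i)} (h : Reduced (x :: u)) :
    ∀ l ∈ u.head?, x.1 ≠ l.1 :=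
  (List.isChain_cons.mp h.2).1

variable [LinearOrder ι] (σ : ∀ i, SignFunction (Gs i))

/-- The number of positive letters and ascents minus the number of negative letters and
descents of a list of letters. -/
def excess : List (Σ i, Gs i) → ℤ
  | [] => 0
  | x :: w => (σ x.1).sign x.2 + headSign x.1 w + excess w

@[simp]
theorem excess_nil : excess σ [] = 0 := rfl

open Classical in
/-- The correction term in the comparison of two lists with distinct first letters. -/
noncomputable def letterDefect (x y : Σ i, Gs i) : ℤ :=
  if h : x.1 = y.1 then
    (σ x.1).sign x.2 - (σ y.1).sign y.2 + (σ y.1).sign ((h ▸ x.2)⁻¹ * y.2)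
  else indexSign x.1 y.1

theorem letterDefect_same {i : ι} (a b : Gs i) :
    letterDefect σ ⟨i, a⟩ ⟨i, b⟩ = (σ i).sign a - (σ i).sign b + (σ i).sign (a⁻¹ * b) := by
  simp [letterDefect]

theorem letterDefect_of_ne {x y : Σ i, Gs i} (h : x.1 ≠ y.1) :
    letterDefect σ x y = indexSign x.1 y.1 := by
  simp [letterDefect, h]

theorem letterDefect_swap (x y : Σ i, Gs i) : letterDefect σ y x = -letterDefect σ x y := by
  obtain ⟨i, a⟩ := x
  obtain ⟨j, b⟩ := y
  rcases eq_or_ne i j with rfl | h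
  · have := (σ i).sign_inv (a⁻¹ * b)
    rw [mul_inv_rev, inv_inv] at this
    rw [letterDefect_same, letterDefect_same, this]
    ring
  · rw [letterDefect_of_ne σ (x := ⟨i, a⟩) (y := ⟨j, b⟩) h,
      letterDefect_of_ne σ (x := ⟨j, b⟩) (y := ⟨i, a⟩) h.symm, indexSign_swap]

theorem abs_letterDefect_le {x y : Σ i, Gs i} (hx : x.2 ≠ 1) (hy : y.2 ≠ 1) (hxy : x ≠ y) :
    |letterDefect σ x y| ≤ 1 := by
  obtain ⟨i, a⟩ := x
  obtain ⟨j, b⟩ := y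
  rcases eq_or_ne i j with rfl | h
  · have hab : a⁻¹ * b ≠ 1 := fun h => hxy (by rw [inv_mul_eq_one.mp h])
    have h1 := (σ i).sign_mul a (a⁻¹ * b)
    have h2 := (σ i).sign_mul b (a⁻¹ * b)⁻¹
    rw [(σ i).sign_inv, mul_inv_rev, inv_inv, mul_inv_cancel_left] at h2
    rw [mul_inv_cancel_left] at h1
    rw [letterDefect_same, abs_le]
    rcases (σ i).sign_of_ne_one a hx with h3 | h3 <;>
      rcases (σ i).sign_of_ne_one b hy with h4 | h4 <;>
      rcases (σ i).sign_of_ne_one _ hab with h5 | h5 <;>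
      simp [h3, h4, h5] at h1 h2 ⊢
  · rw [letterDefect_of_ne σ (x := ⟨i, a⟩) (y := ⟨j, b⟩) h]
    exact abs_indexSign_le _ _

open Classical in
/-- The signed comparison of two lists of letters, invariant under left multiplication. -/
noncomputable def comparison : List (Σ i, Gs i) → List (Σ i, Gs i) → ℤ
  | [], v => excess σ v
  | x :: u, [] => -excess σ (x :: u)
  | x :: u, y :: v => if x = y then comparison u v else
      excess σ (y :: v) - excess σ (x :: u) + letterDefect σ x y

@[simp]
theorem comparison_nil_left (v : List (Σ i, Gs i)) : comparison σ [] v = excess σ v := by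
  simp [comparison]

@[simp]
theorem comparison_nil_right (u : List (Σ i, Gs i)) : comparison σ u [] = -excess σ u := by
  cases u <;> simp [comparison, excess]

@[simp]
theorem comparison_cons_self (x : Σ i, Gs i) (u v : List (Σ i, Gs i)) :
    comparison σ (x :: u) (x :: v) = comparison σ u v := by
  simp [comparison]

theorem comparison_cons_of_ne {x y : Σ i, Gs i} (h : x ≠ y) (u v : List (Σ i, Gs i)) :
    comparison σ (x :: u) (y :: v) =
      excess σ (y :: v) - excess σ (x :: u) + letterDefect σ x y := by
  simp [comparison, h]

theorem comparison_swap (u v : List (Σ i, Gs i)) : comparison σ v u = -comparison σ u v := by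
  induction u generalizing v with
  | nil => simp
  | cons x u ih =>
    cases v with
    | nil => simp
    | cons y v =>
      rcases eq_or_ne x y with rfl | h
      · simpa using ih v
      · rw [comparison_cons_of_ne σ h, comparison_cons_of_ne σ h.symm, letterDefect_swap]
        ring

theorem odd_excess {u : List (Σ i, Gs i)} (hu : Reduced u) (hne : u ≠ []) :
    Odd (excess σ u) := by
  induction u with
  | nil => exact absurd rfl hne
  | cons x u ih =>
    have hx : Odd ((σ x.1).sign x.2) := by
      rcases (σ x.1).sign_of_ne_one x.2 (hu.1 x List.mem_cons_self) with h | h <;> rw [h] <;>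
        decide
    cases u with
    | nil => simpa [excess, headSign] using hx
    | cons y v =>
      have hy : Odd (headSign x.1 (y :: v)) := by
        rcases indexSign_of_ne (hu.head y (by simp)) with h | h <;> rw [headSign, h] <;> decide
      rw [excess]
      exact (hx.add_odd hy).add_odd (ih hu.tail (by simp))

theorem abs_comparison_sub_le {u v : List (Σ i, Gs i)} (hu : Reduced u) (hv : Reduced v) :
    |comparison σ u v - excess σ v + excess σ u| ≤ 1 := by
  induction u generalizing v with
  | nil => simp [excess]
  | cons x u ih =>
    cases v with
    | nil => simp
    | cons y v =>
      rcases eq_or_ne x y with rfl | h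
      · have key : comparison σ (x :: u) (x :: v) - excess σ (x :: v) + excess σ (x :: u) =
            comparison σ u v - excess σ v + excess σ u + headSign x.1 u - headSign x.1 v := by
          simp only [comparison_cons_self, excess]
          ring
        rw [key]
        have hIH := ih hu.tail hv.tail
        have hxu := hu.head
        have hxv := hv.head
        clear key
        cases u with
        | nil => simpa [excess, headSign] using abs_headSign_le x.1 v
        | cons a u =>
          cases v with
          | nil => simpa [headSign] using abs_indexSign_le x.1 a.1
          | cons b v =>
            have hxa := hxu a (by simp)
            have hxb := hxv b (by simp)
            rcases eq_or_ne a.1 b.1 with hab | hab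
            · simpa [headSign, hab] using hIH
            · have hne : a ≠ b := fun h => hab (by rw [h])
              rw [comparison_cons_of_ne σ hne, letterDefect_of_ne σ hab]
              convert abs_indexSign_cycle_le hxa hxb hab using 2
              simp only [headSign]
              ring
      · rw [comparison_cons_of_ne σ h]
        convert abs_letterDefect_le σ (hu.1 x List.mem_cons_self) (hv.1 y List.mem_cons_self) h
          using 2
        ring

theorem comparison_rcons_of_ne [∀ i, DecidableEq (Gs i)] {i : ι} {p q : Word.Pair Gs i}
    (h : p.head ≠ q.head) :
    comparison σ (Word.rcons p).toList (Word.rcons q).toList =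
      (σ i).sign (p.head⁻¹ * q.head) + (headSign i q.tail.toList + excess σ q.tail.toList) -
        (headSign i p.tail.toList + excess σ p.tail.toList) := by
  have nontrivial_left : ∀ p q : Word.Pair Gs i, p.head = 1 → q.head ≠ 1 →
      comparison σ (Word.rcons p).toList (Word.rcons q).toList =
        (σ i).sign q.head + (headSign i q.tail.toList + excess σ q.tail.toList) -
          (headSign i p.tail.toList + excess σ p.tail.toList) := by
    intro p q hp hq
    have hne := Word.fstIdx_ne_iff.mp p.fstIdx_ne
    rw [Word.rcons, dif_pos hp, Word.rcons, dif_neg hq, Word.cons_toList]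
    generalize p.tail.toList = u at hne ⊢
    cases u with
    | nil => simp [excess, headSign]; ring
    | cons x u =>
      have hx : i ≠ x.1 := hne x (by simp)
      rw [comparison_cons_of_ne σ (fun h => hx (by rw [h])), letterDefect_of_ne σ hx.symm,
        indexSign_swap i x.1]
      simp only [excess, headSign]
      ring
  by_cases hp : p.head = 1
  · rw [nontrivial_left p q hp (fun hq => h (hp.trans hq.symm)), hp, inv_one, one_mul]
  · by_cases hq : q.head = 1
    · rw [comparison_swap, nontrivial_left q p hq hp, hq, mul_one, (σ i).sign_inv]
      ring
    · rw [Word.rcons, dif_neg hp, Word.rcons, dif_neg hq, Word.cons_toList, Word.cons_toList,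
        comparison_cons_of_ne σ (by simpa using h), letterDefect_same]
      simp only [excess]
      ring

theorem comparison_rcons_of_eq [∀ i, DecidableEq (Gs i)] {i : ι} {p q : Word.Pair Gs i}
    (h : p.head = q.head) :
    comparison σ (Word.rcons p).toList (Word.rcons q).toList =
      comparison σ p.tail.toList q.tail.toList := by
  by_cases hp : p.head = 1
  · rw [Word.rcons, dif_pos hp, Word.rcons, dif_pos (h ▸ hp)]
  · have hq : q.head ≠ 1 := h ▸ hp
    rw [Word.rcons, dif_neg hp, Word.rcons, dif_neg hq, Word.cons_toList, Word.cons_toList, h,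
      comparison_cons_self]

theorem comparison_smul [DecidableEq ι] [∀ i, DecidableEq (Gs i)] (g : Monoid.CoprodI Gs)
    (u v : Word Gs) :
    comparison σ (g • u).toList (g • v).toList = comparison σ u.toList v.toList := by
  induction g using Monoid.CoprodI.induction_on generalizing u v with
  | one => simp
  | of i m =>
    conv_rhs => rw [← (Word.equivPair i).symm_apply_apply u,
      ← (Word.equivPair i).symm_apply_apply v, Word.equivPair_symm, Word.equivPair_symm]
    rw [Word.of_smul_def, Word.of_smul_def]
    by_cases h : (Word.equivPair i u).head = (Word.equivPair i v).head
    · rw [comparison_rcons_of_eq σ h, comparison_rcons_of_eq σ (by simp [h])]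
    · rw [comparison_rcons_of_ne σ h, comparison_rcons_of_ne σ (by simpa using h)]
      simp [mul_assoc]
  | mul x y hx hy => rw [mul_smul, mul_smul, hx, hy]

open Classical in
/-- The excess of the reduced word of an element of a free product. -/
noncomputable def wordExcess (g : Monoid.CoprodI Gs) : ℤ :=
  excess σ (g • (Word.empty : Word Gs)).toList

open Classical in
theorem comparison_smul_empty (x y : Monoid.CoprodI Gs) :
    comparison σ (x • (Word.empty : Word Gs)).toList (y • (Word.empty : Word Gs)).toList =
      wordExcess σ (x⁻¹ * y) := by
  rw [← comparison_smul σ x⁻¹, inv_smul_smul, smul_smul, Word.empty_toList,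
    comparison_nil_left, wordExcess]

theorem wordExcess_inv (x : Monoid.CoprodI Gs) : wordExcess σ x⁻¹ = -wordExcess σ x := by
  classical
  have h1 := comparison_smul_empty σ x 1
  have h2 := comparison_smul_empty σ 1 x
  rw [comparison_swap, h2] at h1
  simpa using h1.symm

theorem add_sub_one_le_wordExcess_mul (x y : Monoid.CoprodI Gs) :
    wordExcess σ x + wordExcess σ y - 1 ≤ wordExcess σ (x * y) := by
  classical
  have h := abs_comparison_sub_le σ (u := (x⁻¹ • (Word.empty : Word Gs)).toList)
    (v := (y • (Word.empty : Word Gs)).toList) ⟨Word.ne_one _, Word.chain_ne _⟩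
    ⟨Word.ne_one _, Word.chain_ne _⟩
  rw [comparison_smul_empty, inv_inv] at h
  have h1 := wordExcess_inv σ x
  unfold wordExcess at h1 h ⊢
  rw [abs_le] at h
  omega

theorem wordExcess_ne_zero {x : Monoid.CoprodI Gs} (hx : x ≠ 1) : wordExcess σ x ≠ 0 := by
  classical
  have h : (x • (Word.empty : Word Gs)).toList ≠ [] := fun h => hx <| by
    have : x • (Word.empty : Word Gs) = Word.empty := Word.ext h
    simpa [Word.prod_smul] using congrArg Word.prod this
  intro h0
  have := odd_excess σ (u := (x • (Word.empty : Word Gs)).toList)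
    ⟨Word.ne_one _, Word.chain_ne _⟩ h
  rw [wordExcess] at h0
  simp [h0] at this

end FreeProductOrder

open FreeProductOrder in
/-- A free product of left-orderable groups is left-orderable. -/
theorem Monoid.CoprodI.exists_linearOrder_mul_lt_mul {ι : Type*} (Gs : ι → Type*)
    [∀ i, Group (Gs i)]
    (hLO : ∀ i, ∃ le : Gs i → Gs i → Prop, IsLinearOrder (Gs i) le ∧
      ∀ a b c : Gs i, le a b → le (c * a) (c * b)) :
    ∃ _ : LinearOrder (Monoid.CoprodI Gs), ∀ a b c : Monoid.CoprodI Gs, a < b → c * a < c * b := by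
  classical
  let : LinearOrder ι := linearOrderOfSTO WellOrderingRel
  have hσ : ∀ i, Nonempty (SignFunction (Gs i)) := fun i => by
    obtain ⟨le, h1, h2⟩ := hLO i
    exact SignFunction.nonempty_of_leftOrder le h1 h2
  let σ : ∀ i, SignFunction (Gs i) := fun i => (hσ i).some
  let r : Monoid.CoprodI Gs → Monoid.CoprodI Gs → Prop := fun a b => 0 < wordExcess σ (a⁻¹ * b)
  have hr : IsStrictTotalOrder (Monoid.CoprodI Gs) r :=
    { irrefl := fun a => by
        have := wordExcess_inv σ (1 : Monoid.CoprodI Gs)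
        simp only [r, inv_mul_cancel]
        rw [inv_one] at this
        omega
      trans := fun a b c hab hbc => by
        have := add_sub_one_le_wordExcess_mul σ (a⁻¹ * b) (b⁻¹ * c)
        simp only [r] at hab hbc ⊢
        rw [mul_assoc, mul_inv_cancel_left] at this
        omega
      trichotomous := fun a b hab hba => by
        by_contra h
        have h0 := wordExcess_ne_zero σ (x := a⁻¹ * b) (fun h' => h (inv_mul_eq_one.mp h'))
        have h1 := wordExcess_inv σ (a⁻¹ * b)
        rw [mul_inv_rev, inv_inv] at h1
        simp only [r] at hab hba
        omega }
  refine ⟨linearOrderOfSTO r, fun a b c hab => ?_⟩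
  have hab' : r a b := hab
  show r (c * a) (c * b)
  simpa [r, mul_assoc] using hab'

namespace FreeProductTree

open Monoid

variable {ι : Type*} (Gs : ι → Type*) [∀ i, Group (Gs i)]

/-- The edges of the Bass–Serre tree of a free product: pairs of a group element and an
index, ordered lexicographically. -/
def Edge : Type _ := CoprodI Gs × ι

/-- The vertices of the Bass–Serre tree of a free product: the group elements and the left
cosets of the factors. -/
abbrev Vertex : Type _ :=
  CoprodI Gs ⊕ Σ i, CoprodI Gs ⧸ (CoprodI.of : Gs i →* CoprodI Gs).range

instance : MulAction (CoprodI Gs) (Edge Gs) where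
  smul g e := (g * e.1, e.2)
  one_smul _ := Prod.ext (one_mul _) rfl
  mul_smul _ _ _ := Prod.ext (mul_assoc _ _ _) rfl

noncomputable instance [LinearOrder (CoprodI Gs)] [LinearOrder ι] : LinearOrder (Edge Gs) :=
  inferInstanceAs (LinearOrder (CoprodI Gs ×ₗ ι))

theorem edge_lt_iff [LinearOrder (CoprodI Gs)] [LinearOrder ι] (e f : Edge Gs) :
    e < f ↔ e.1 < f.1 ∨ e.1 = f.1 ∧ e.2 < f.2 :=
  Prod.Lex.toLex_lt_toLex (x := e) (y := f)

/-- The linear action of a free product on the mod 2 chains of edges. -/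
noncomputable def chainAction : CoprodI Gs →* Equiv.Perm (Edge Gs →₀ ZMod 2) where
  toFun g := (Finsupp.domCongr (MulAction.toPerm g)).toEquiv
  map_one' := by ext; simp
  map_mul' g h := by ext; simp [mul_smul]

variable {Gs} in
theorem chainAction_add (g : CoprodI Gs) (p q : Edge Gs →₀ ZMod 2) :
    chainAction Gs g (p + q) = chainAction Gs g p + chainAction Gs g q :=
  map_add (Finsupp.domCongr (MulAction.toPerm g)) p q

variable {Gs} in
theorem chainAction_zero (g : CoprodI Gs) : chainAction Gs g 0 = 0 :=
  map_zero (Finsupp.domCongr (MulAction.toPerm g))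

variable {Gs} in
theorem chainAction_single (g : CoprodI Gs) (e : Edge Gs) :
    chainAction Gs g (Finsupp.single e 1) = Finsupp.single (g • e) 1 := by
  simp [chainAction, Finsupp.domCongr]

/-- The chain of the edge joining the base vertex to the coset of a factor. -/
noncomputable def baseEdge (i : ι) : Edge Gs →₀ ZMod 2 :=
  Finsupp.single ((1, i) : CoprodI Gs × ι) 1

theorem chainAction_baseEdge (g : CoprodI Gs) (i : ι) :
    chainAction Gs g (baseEdge Gs i) = Finsupp.single ((g, i) : CoprodI Gs × ι) 1 :=
  (chainAction_single g _).trans (congrArg (Finsupp.single · 1) (Prod.ext (mul_one g) rfl))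

/-- The affine action of a free product on the mod 2 chains of edges for which each factor
fixes the chain of its base edge. -/
noncomputable def affineAction : CoprodI Gs →* Equiv.Perm (Edge Gs →₀ ZMod 2) :=
  CoprodI.lift fun i => (MulAut.conj (Equiv.addLeft (baseEdge Gs i))).toMonoidHom.comp
    ((chainAction Gs).comp CoprodI.of)

theorem affineAction_of (i : ι) (x : Gs i) (p : Edge Gs →₀ ZMod 2) :
    affineAction Gs (CoprodI.of x) p =
      baseEdge Gs i + chainAction Gs (CoprodI.of x) (-baseEdge Gs i + p) := by
  simp [affineAction]

theorem affineAction_of_baseEdge (i : ι) (x : Gs i) :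
    affineAction Gs (CoprodI.of x) (baseEdge Gs i) = baseEdge Gs i := by
  rw [affineAction_of, neg_add_cancel, chainAction_zero, add_zero]

theorem affineAction_eq (g : CoprodI Gs) (p : Edge Gs →₀ ZMod 2) :
    affineAction Gs g p = affineAction Gs g 0 + chainAction Gs g p := by
  induction g using CoprodI.induction_on generalizing p with
  | one => simp
  | of i x =>
    rw [affineAction_of, affineAction_of, add_zero, chainAction_add, add_assoc]
  | mul g h hg hh =>
    simp only [map_mul, Equiv.Perm.mul_apply]
    rw [hg, hh, hg (affineAction Gs h 0), chainAction_add, add_assoc]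

/-- The chain of edges on the path from the base vertex to a given vertex. -/
noncomputable def path : Vertex Gs → Edge Gs →₀ ZMod 2
  | .inl g => affineAction Gs g 0
  | .inr ⟨i, c⟩ => Quotient.liftOn' c (fun g => affineAction Gs g (baseEdge Gs i)) <| by
      intro g h hgh
      obtain ⟨x, hx⟩ := QuotientGroup.leftRel_apply.mp hgh
      rw [← mul_inv_cancel_left g h, ← hx, map_mul, Equiv.Perm.mul_apply,
        affineAction_of_baseEdge]

/-- The Bass–Serre tree of a free product of groups. -/
noncomputable def tree [LinearOrder (CoprodI Gs)] [LinearOrder ι]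
    (hlt : ∀ a b c : CoprodI Gs, a < b → c * a < c * b) :
    OrderedGTree (CoprodI Gs) (Vertex Gs) (Edge Gs) where
  src e := .inl e.1
  tgt e := .inr ⟨e.2, (e.1 : CoprodI Gs ⧸ (CoprodI.of : Gs e.2 →* CoprodI Gs).range)⟩
  src_smul _ _ := rfl
  tgt_smul _ _ := rfl
  base := .inl 1
  path := path Gs
  path_base := by simp [path]
  path_tgt e := by
    obtain ⟨g, i⟩ := e
    exact (affineAction_eq Gs g _).trans (congrArg _ (chainAction_baseEdge Gs g i))
  connected Z hbase hZ := by
    have hcoset : ∀ (i : ι) (g : CoprodI Gs), (.inl g : Vertex Gs) ∈ Z ↔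
        (.inr ⟨i, (g : CoprodI Gs ⧸ (CoprodI.of : Gs i →* CoprodI Gs).range)⟩ : Vertex Gs) ∈ Z :=
      fun i g => hZ (g, i)
    have hinl : ∀ g h : CoprodI Gs, (.inl h : Vertex Gs) ∈ Z ↔ (.inl (h * g) : Vertex Gs) ∈ Z := by
      intro g
      induction g using CoprodI.induction_on with
      | one => simp
      | of i x =>
        intro h
        rw [hcoset i h, hcoset i (h * CoprodI.of x),
          QuotientGroup.mk_mul_of_mem h (MonoidHom.mem_range.mpr ⟨x, rfl⟩)]
      | mul g g' hg hg' => intro h; rw [hg, hg', mul_assoc]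
    have hall : ∀ g : CoprodI Gs, (.inl g : Vertex Gs) ∈ Z := fun g => by
      simpa using (hinl g 1).mp hbase
    rintro (g | ⟨i, c⟩)
    · exact hall g
    · induction c using QuotientGroup.induction_on with
      | H g => exact (hcoset i g).mp (hall g)
  eq_one_of_smul_edge g e h := by
    have : g * e.1 = e.1 := congrArg Prod.fst h
    simpa using this
  smul_lt_smul g e f h := by
    rw [edge_lt_iff] at h ⊢
    rcases h with h | ⟨h, h'⟩
    · exact .inl (hlt _ _ _ h)
    · exact .inr ⟨congrArg (g * ·) h, h'⟩
  eq_one_of_pow g n hn h := by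
    have hpos : ∀ g : CoprodI Gs, 1 < g → ∀ k : ℕ, 1 < g ^ (k + 1) := by
      intro g hg k
      induction k with
      | zero => simpa using hg
      | succ k ih => exact hg.trans (by simpa [pow_succ'] using hlt _ _ g ih)
    obtain ⟨k, rfl⟩ := Nat.exists_eq_succ_of_ne_zero hn.ne'
    rcases lt_trichotomy 1 g with h1 | h1 | h1
    · exact absurd h (hpos g h1 k).ne'
    · exact h1.symm
    · have h2 : 1 < g⁻¹ := by simpa using hlt _ _ g⁻¹ h1
      have := hpos g⁻¹ h2 k
      rw [inv_pow, h, inv_one] at this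
      exact absurd this (lt_irrefl _)

theorem tree_freeOn [LinearOrder (CoprodI Gs)] [LinearOrder ι]
    (hlt : ∀ a b c : CoprodI Gs, a < b → c * a < c * b) {A : Subgroup (CoprodI Gs)}
    (hA : ∀ (i : ι) (g : CoprodI Gs), A ⊓ Subgroup.map (MulAut.conj g).toMonoidHom
      (MonoidHom.range (CoprodI.of : Gs i →* CoprodI Gs)) = ⊥) :
    (tree Gs hlt).FreeOn A := by
  rintro a ha (g | ⟨i, c⟩) h
  · have h' : a * g = g := Sum.inl_injective h
    simpa using h'
  · induction c using QuotientGroup.induction_on with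
    | H g =>
      have h' : ((a * g : CoprodI Gs) : CoprodI Gs ⧸ (CoprodI.of : Gs i →* CoprodI Gs).range) =
          g := eq_of_heq (Sigma.mk.inj (Sum.inr_injective h)).2
      have hmem := QuotientGroup.eq.mp h'.symm
      rw [← Subgroup.mem_bot, ← hA i g]
      exact ⟨ha, Subgroup.mem_map_conj.mpr (by rwa [mul_assoc])⟩

end FreeProductTree

/-- Theorem AMS: let `G = ∗_{i ∈ I} G_i` be a free product of left-orderable groups, let
`A, B` be finitely generated free subgroups of `G` intersecting every conjugate of every
free factor trivially, and let `S` be a system of representatives of the double cosets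
`AsB` in `G`.  Then `∑_{s ∈ S} r̄ank(A ∩ sBs⁻¹) ≤ r̄ank(A) ⬝ r̄ank(B)`; in particular,
`r̄ank(A ∩ B) ≤ r̄ank(A) ⬝ r̄ank(B)`, where `r̄ank(H) = max (0, rank H - 1)`. -/
theorem AMS_strengthened_hanna_neumann {ι : Type*} (Gs : ι → Type*) [∀ i, Group (Gs i)]
    (hLO : ∀ i, ∃ le : Gs i → Gs i → Prop, IsLinearOrder (Gs i) le ∧
        ∀ a b c : Gs i, le a b → le (c * a) (c * b))
    (A B : Subgroup (Monoid.CoprodI Gs)) [Group.FG A] [Group.FG B]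
    [IsFreeGroup A] [IsFreeGroup B]
    (hA : ∀ (i : ι) (g : Monoid.CoprodI Gs),
        A ⊓ Subgroup.map (MulAut.conj g).toMonoidHom
          (MonoidHom.range (Monoid.CoprodI.of : Gs i →* Monoid.CoprodI Gs)) = ⊥)
    (hB : ∀ (i : ι) (g : Monoid.CoprodI Gs),
        B ⊓ Subgroup.map (MulAut.conj g).toMonoidHom
          (MonoidHom.range (Monoid.CoprodI.of : Gs i →* Monoid.CoprodI Gs)) = ⊥)
    (S : Set (Monoid.CoprodI Gs))
    (hS : ∀ g : Monoid.CoprodI Gs, ∃! s, s ∈ S ∧ ∃ a ∈ A, ∃ b ∈ B, g = a * s * b) :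
    (∑' s : S,
        (grank ↥(A ⊓ Subgroup.map (MulAut.conj (s : Monoid.CoprodI Gs)).toMonoidHom B)
          - 1) ≤ (grank A - 1) * (grank B - 1)) ∧
      grank ↥(A ⊓ B) - 1 ≤ (grank A - 1) * (grank B - 1) := by
  classical
  obtain ⟨_, hlt⟩ := Monoid.CoprodI.exists_linearOrder_mul_lt_mul Gs hLO
  let : LinearOrder ι := linearOrderOfSTO WellOrderingRel
  have hsum := (FreeProductTree.tree Gs hlt).tsum_grank_sub_one_le
    (FreeProductTree.tree_freeOn Gs hlt hA) (FreeProductTree.tree_freeOn Gs hlt hB) hS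
  obtain ⟨s, hs⟩ := exists_grank_inf_le hS
  exact ⟨hsum, (tsub_le_tsub_right hs 1).trans ((ENNReal.le_tsum s).trans hsum)⟩
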